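/- arXiv:1506.08520 — 2 statements merged into one kernel-verified Lean document; each statement's English description precedes it below -/
import Mathlib

section
/- Let (η, ϕ) be a smooth solution of the two-dimensional water-wave system on [0,T], with (conserved) energy 𝓗 := 𝓗(0). Assume there exist positive constants A, B such that B < 2/7, T ≥ (4/(2 − 7B))·(1 + 5L₁A/√g), sup_{t∈[0,T]} ‖∂ₓη(t,·)‖_{L^∞([0,L₁])} ≤ B and sup_{t∈[0,T]} ‖∂ₓψ(t,·)‖_{L²([0,L₁])} ≤ A·√(2𝓗). Then L₁∫₀ᵀ Θ(t,L₁) dt ≥ 𝓗 + (L₁/2)∫₀ᵀ∫₋ₕ^{m(t)} (∂_yϕ(t,L₁,y))² dy dt + (h/16)∫₀ᵀ∫₀^{L₁} (∂ₓϕ(t,x,−h))² dx dt. -/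
open Real Set MeasureTheory

noncomputable section

/-- `∂ₓϕ(t,x,y)` -/
def phiX (ϕ : ℝ → ℝ → ℝ → ℝ) (t x y : ℝ) : ℝ := deriv (fun x' => ϕ t x' y) x

/-- `∂_yϕ(t,x,y)` -/
def phiY (ϕ : ℝ → ℝ → ℝ → ℝ) (t x y : ℝ) : ℝ := deriv (fun y' => ϕ t x y') y

/-- `∂ₜϕ(t,x,y)` -/
def phiT (ϕ : ℝ → ℝ → ℝ → ℝ) (t x y : ℝ) : ℝ := deriv (fun s => ϕ s x y) t

/-- `∂ₓη(t,x)` -/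
def etaX (η : ℝ → ℝ → ℝ) (t x : ℝ) : ℝ := deriv (fun x' => η t x') x

/-- `∂ₜη(t,x)` -/
def etaT (η : ℝ → ℝ → ℝ) (t x : ℝ) : ℝ := deriv (fun s => η s x) t

/-- the trace `ψ(t,x) = ϕ(t,x,η(t,x))` -/
def psi (η : ℝ → ℝ → ℝ) (ϕ : ℝ → ℝ → ℝ → ℝ) (t x : ℝ) : ℝ := ϕ t x (η t x)

/-- `∂ₜψ(t,x)` -/
def psiT (η : ℝ → ℝ → ℝ) (ϕ : ℝ → ℝ → ℝ → ℝ) (t x : ℝ) : ℝ :=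
  deriv (fun s => psi η ϕ s x) t

/-- `∂ₓψ(t,x)` -/
def psiX (η : ℝ → ℝ → ℝ) (ϕ : ℝ → ℝ → ℝ → ℝ) (t x : ℝ) : ℝ :=
  deriv (fun x' => psi η ϕ t x') x

/-- `Θ(t,x) = -η ∂ₜψ - (g/2) η²` -/
def Theta (g : ℝ) (η : ℝ → ℝ → ℝ) (ϕ : ℝ → ℝ → ℝ → ℝ) (t x : ℝ) : ℝ :=
  -(η t x) * psiT η ϕ t x - g / 2 * (η t x) ^ 2

/-- the energy `𝓗(t)` -/
def energy2D (L₁ h g : ℝ) (η : ℝ → ℝ → ℝ) (ϕ : ℝ → ℝ → ℝ → ℝ) (t : ℝ) : ℝ :=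
  g / 2 * (∫ x in (0:ℝ)..L₁, (η t x) ^ 2)
    + 1 / 2 * ∫ x in (0:ℝ)..L₁, ∫ y in (-h)..(η t x),
        ((phiX ϕ t x y) ^ 2 + (phiY ϕ t x y) ^ 2)

/-- A smooth solution of the two-dimensional water-wave system on `[0,T]`:
`η : [0,T] × [0,L₁] → ℝ` and `ϕ` on the fluid domain (both given as smooth total
functions), satisfying the incompressibility, boundary, kinematic and Bernoulli
(dynamic) conditions, together with `η ≥ -h/2`, zero mean, and the right-angle
contact conditions `∂ₓη(t,0) = ∂ₓη(t,L₁) = 0`. -/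
structure IsWW2D (L₁ h g T : ℝ) (η : ℝ → ℝ → ℝ) (ϕ : ℝ → ℝ → ℝ → ℝ) : Prop where
  smooth_eta : ContDiff ℝ (⊤ : ℕ∞) (fun p : ℝ × ℝ => η p.1 p.2)
  smooth_phi : ContDiff ℝ (⊤ : ℕ∞) (fun p : ℝ × ℝ × ℝ => ϕ p.1 p.2.1 p.2.2)
  eta_lower : ∀ t ∈ Icc (0:ℝ) T, ∀ x ∈ Icc (0:ℝ) L₁, -h / 2 ≤ η t x
  eta_mean : ∀ t ∈ Icc (0:ℝ) T, (∫ x in (0:ℝ)..L₁, η t x) = 0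
  laplace : ∀ t ∈ Icc (0:ℝ) T, ∀ x ∈ Icc (0:ℝ) L₁, ∀ y ∈ Icc (-h) (η t x),
    deriv (fun x' => phiX ϕ t x' y) x + deriv (fun y' => phiY ϕ t x y') y = 0
  bc_left : ∀ t ∈ Icc (0:ℝ) T, ∀ y ∈ Icc (-h) (η t 0), phiX ϕ t 0 y = 0
  bc_right : ∀ t ∈ Icc (0:ℝ) T, ∀ y ∈ Icc (-h) (η t L₁), phiX ϕ t L₁ y = 0
  bc_bottom : ∀ t ∈ Icc (0:ℝ) T, ∀ x ∈ Icc (0:ℝ) L₁, phiY ϕ t x (-h) = 0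
  kinematic : ∀ t ∈ Icc (0:ℝ) T, ∀ x ∈ Icc (0:ℝ) L₁,
    etaT η t x = phiY ϕ t x (η t x) - etaX η t x * phiX ϕ t x (η t x)
  bernoulli : ∀ t ∈ Icc (0:ℝ) T, ∀ x ∈ Icc (0:ℝ) L₁,
    phiT ϕ t x (η t x)
      + 1 / 2 * ((phiX ϕ t x (η t x)) ^ 2 + (phiY ϕ t x (η t x)) ^ 2) + g * η t x = 0
  etaX_left : ∀ t ∈ Icc (0:ℝ) T, etaX η t 0 = 0
  etaX_right : ∀ t ∈ Icc (0:ℝ) T, etaX η t L₁ = 0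


theorem ww_param (f f' : ℝ → ℝ → ℝ) (hf : Continuous (fun p : ℝ × ℝ => f p.1 p.2))
    (hf' : Continuous (fun p : ℝ × ℝ => f' p.1 p.2))
    (hd : ∀ t x, HasDerivAt (fun s => f s x) (f' t x) t) (c d t₀ : ℝ) :
    HasDerivAt (fun t => ∫ x in c..d, f t x) (∫ x in c..d, f' t₀ x) t₀ := by
  have hcomp : IsCompact (Icc (t₀ - 1) (t₀ + 1) ×ˢ uIcc c d) := isCompact_Icc.prod isCompact_uIcc
  obtain ⟨C, hC⟩ := hcomp.exists_bound_of_continuousOn hf'.continuousOn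
  have hsec : ∀ (u : ℝ → ℝ → ℝ), Continuous (fun p : ℝ × ℝ => u p.1 p.2) → ∀ t, Continuous (u t) :=
    fun u hu t => hu.comp (by fun_prop : Continuous fun x : ℝ => (t, x))
  refine (intervalIntegral.hasDerivAt_integral_of_dominated_loc_of_deriv_le
    (F := f) (F' := f') (bound := fun _ => C) (s := Icc (t₀ - 1) (t₀ + 1))
    (Icc_mem_nhds (by linarith) (by linarith)) ?_ ?_ ?_ ?_ ?_ ?_).2
  · exact Filter.Eventually.of_forall fun t => (hsec f hf t).aestronglyMeasurable
  · exact (hsec f hf t₀).intervalIntegrable _ _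
  · exact (hsec f' hf' t₀).aestronglyMeasurable
  · exact Filter.Eventually.of_forall fun x hx t ht => hC (t, x) ⟨ht, uIoc_subset_uIcc hx⟩
  · exact intervalIntegrable_const
  · exact Filter.Eventually.of_forall fun x hx t ht => hd t x

theorem ww_leib (f f' : ℝ → ℝ → ℝ) (hf : Continuous (fun p : ℝ × ℝ => f p.1 p.2))
    (hf' : Continuous (fun p : ℝ × ℝ => f' p.1 p.2))
    (hd : ∀ t x, HasDerivAt (fun s => f s x) (f' t x) t) (c t₀ : ℝ) (a : ℝ → ℝ) (a' : ℝ)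
    (hac : Continuous a) (ha : HasDerivAt a a' t₀) :
    HasDerivAt (fun t => ∫ x in c..a t, f t x)
      ((∫ x in c..a t₀, f' t₀ x) + a' * f t₀ (a t₀)) t₀ := by
  have hsec : ∀ t, Continuous (f t) :=
    fun t => hf.comp (by fun_prop : Continuous fun x : ℝ => (t, x))
  have h1 := ww_param f f' hf hf' hd c (a t₀) t₀
  set g : ℝ → ℝ := fun t => ∫ s in (0:ℝ)..1, f t (a t₀ + (a t - a t₀) * s) with hg
  have hgc : Continuous g := by
    apply intervalIntegral.continuous_parametric_intervalIntegral_of_continuous'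
    exact hf.comp (by fun_prop :
      Continuous fun p : ℝ × ℝ => (p.1, a t₀ + (a p.1 - a t₀) * p.2))
  have hg0 : g t₀ = f t₀ (a t₀) := by simp [hg]
  have hR : ∀ t, (∫ x in c..a t, f t x) = (∫ x in c..a t₀, f t x) + (a t - a t₀) * g t := by
    intro t
    have := intervalIntegral.smul_integral_comp_add_mul (a := (0:ℝ)) (b := 1)
      (f t) (a t - a t₀) (a t₀)
    simp only [smul_eq_mul, mul_zero, add_zero, mul_one, add_sub_cancel] at this
    rw [hg, this]
    exact (intervalIntegral.integral_add_adjacent_intervals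
      ((hsec t).intervalIntegrable _ _) ((hsec t).intervalIntegrable _ _)).symm
  have h2 : HasDerivAt (fun t => (a t - a t₀) * g t) (a' * f t₀ (a t₀)) t₀ := by
    rw [hasDerivAt_iff_tendsto_slope] at ha ⊢
    have := ha.mul ((hgc.tendsto t₀).mono_left nhdsWithin_le_nhds)
    rw [hg0] at this
    refine this.congr fun t => ?_
    simp only [slope_def_field]
    ring
  rw [show (fun t => ∫ x in c..a t, f t x) = _ from funext hR]
  exact h1.add h2

def Sm3 (ϕ : ℝ → ℝ → ℝ → ℝ) : Prop :=
  ContDiff ℝ (⊤ : ℕ∞) (fun p : ℝ × ℝ × ℝ => ϕ p.1 p.2.1 p.2.2)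
def Sm2 (η : ℝ → ℝ → ℝ) : Prop :=
  ContDiff ℝ (⊤ : ℕ∞) (fun p : ℝ × ℝ => η p.1 p.2)

theorem Sm3.cont {ϕ : ℝ → ℝ → ℝ → ℝ} (H : Sm3 ϕ) {Z : Type*} [TopologicalSpace Z] {u v w : Z → ℝ}
    (hu : Continuous u) (hv : Continuous v) (hw : Continuous w) :
    Continuous (fun z => ϕ (u z) (v z) (w z)) :=
  (ContDiff.continuous H).comp (hu.prodMk (hv.prodMk hw))
theorem Sm2.cont {ϕ : ℝ → ℝ → ℝ} (H : Sm2 ϕ) {Z : Type*} [TopologicalSpace Z] {u v : Z → ℝ}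
    (hu : Continuous u) (hv : Continuous v) :
    Continuous (fun z => ϕ (u z) (v z)) :=
  (ContDiff.continuous H).comp (hu.prodMk hv)

abbrev un3 (ϕ : ℝ → ℝ → ℝ → ℝ) : ℝ × ℝ × ℝ → ℝ := fun p => ϕ p.1 p.2.1 p.2.2
abbrev un2 (ϕ : ℝ → ℝ → ℝ) : ℝ × ℝ → ℝ := fun p => ϕ p.1 p.2

theorem Sm3.fd {ϕ} (H : Sm3 ϕ) (p) : HasFDerivAt (un3 ϕ) (fderiv ℝ (un3 ϕ) p) p :=
  ((ContDiff.differentiable H (by simp)) p).hasFDerivAt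
theorem Sm2.fd {ϕ} (H : Sm2 ϕ) (p) : HasFDerivAt (un2 ϕ) (fderiv ℝ (un2 ϕ) p) p :=
  ((ContDiff.differentiable H (by simp)) p).hasFDerivAt

theorem Sm3.comp0 {ϕ} (H : Sm3 ϕ) {u v w : ℝ → ℝ} {u' v' w' s : ℝ} (hu : HasDerivAt u u' s)
    (hv : HasDerivAt v v' s) (hw : HasDerivAt w w' s) :
    HasDerivAt (fun s => ϕ (u s) (v s) (w s))
      (fderiv ℝ (un3 ϕ) (u s, v s, w s) (u', v', w')) s :=
  (H.fd (u s, v s, w s)).comp_hasDerivAt (f := fun s => (u s, v s, w s)) s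
    (hu.prodMk (hv.prodMk hw))
theorem Sm2.comp0 {ϕ} (H : Sm2 ϕ) {u v : ℝ → ℝ} {u' v' s : ℝ} (hu : HasDerivAt u u' s)
    (hv : HasDerivAt v v' s) :
    HasDerivAt (fun s => ϕ (u s) (v s))
      (fderiv ℝ (un2 ϕ) (u s, v s) (u', v')) s :=
  (H.fd (u s, v s)).comp_hasDerivAt (f := fun s => (u s, v s)) s (hu.prodMk hv)

theorem Sm3.eqX {ϕ} (H : Sm3 ϕ) (t x y) : phiX ϕ t x y = fderiv ℝ (un3 ϕ) (t, x, y) (0, 1, 0) :=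
  (H.comp0 (hasDerivAt_const x t) (hasDerivAt_id x) (hasDerivAt_const x y)).deriv
theorem Sm3.eqY {ϕ} (H : Sm3 ϕ) (t x y) : phiY ϕ t x y = fderiv ℝ (un3 ϕ) (t, x, y) (0, 0, 1) :=
  (H.comp0 (hasDerivAt_const y t) (hasDerivAt_const y x) (hasDerivAt_id y)).deriv
theorem Sm3.eqT {ϕ} (H : Sm3 ϕ) (t x y) : phiT ϕ t x y = fderiv ℝ (un3 ϕ) (t, x, y) (1, 0, 0) :=
  (H.comp0 (hasDerivAt_id t) (hasDerivAt_const t x) (hasDerivAt_const t y)).deriv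
theorem Sm2.eqX {ϕ} (H : Sm2 ϕ) (t x) : etaX ϕ t x = fderiv ℝ (un2 ϕ) (t, x) (0, 1) :=
  (H.comp0 (hasDerivAt_const x t) (hasDerivAt_id x)).deriv
theorem Sm2.eqT {ϕ} (H : Sm2 ϕ) (t x) : etaT ϕ t x = fderiv ℝ (un2 ϕ) (t, x) (1, 0) :=
  (H.comp0 (hasDerivAt_id t) (hasDerivAt_const t x)).deriv

theorem Sm3.comp {ϕ} (H : Sm3 ϕ) {u v w : ℝ → ℝ} {u' v' w' s : ℝ} (hu : HasDerivAt u u' s)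
    (hv : HasDerivAt v v' s) (hw : HasDerivAt w w' s) :
    HasDerivAt (fun s => ϕ (u s) (v s) (w s))
      (u' * phiT ϕ (u s) (v s) (w s) + v' * phiX ϕ (u s) (v s) (w s)
        + w' * phiY ϕ (u s) (v s) (w s)) s := by
  convert H.comp0 hu hv hw using 1
  rw [H.eqX, H.eqY, H.eqT, ← smul_eq_mul, ← smul_eq_mul, ← smul_eq_mul, ← map_smul, ← map_smul,
    ← map_smul, ← map_add, ← map_add]
  simp
theorem Sm3.sX {ϕ} (H : Sm3 ϕ) : Sm3 (phiX ϕ) := by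
  have : ContDiff ℝ (⊤ : ℕ∞) (fun p => fderiv ℝ (un3 ϕ) p (0, 1, 0)) :=
    (ContDiff.fderiv_right H (by simp)).clm_apply contDiff_const
  have e := funext fun p : ℝ × ℝ × ℝ => H.eqX p.1 p.2.1 p.2.2
  unfold Sm3
  rw [e]
  exact this
theorem Sm3.sY {ϕ} (H : Sm3 ϕ) : Sm3 (phiY ϕ) := by
  have : ContDiff ℝ (⊤ : ℕ∞) (fun p => fderiv ℝ (un3 ϕ) p (0, 0, 1)) :=
    (ContDiff.fderiv_right H (by simp)).clm_apply contDiff_const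
  have e := funext fun p : ℝ × ℝ × ℝ => H.eqY p.1 p.2.1 p.2.2
  unfold Sm3
  rw [e]
  exact this
theorem Sm3.sT {ϕ} (H : Sm3 ϕ) : Sm3 (phiT ϕ) := by
  have : ContDiff ℝ (⊤ : ℕ∞) (fun p => fderiv ℝ (un3 ϕ) p (1, 0, 0)) :=
    (ContDiff.fderiv_right H (by simp)).clm_apply contDiff_const
  have e := funext fun p : ℝ × ℝ × ℝ => H.eqT p.1 p.2.1 p.2.2
  unfold Sm3
  rw [e]
  exact this
theorem Sm2.sX {ϕ} (H : Sm2 ϕ) : Sm2 (etaX ϕ) := by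
  have : ContDiff ℝ (⊤ : ℕ∞) (fun p => fderiv ℝ (un2 ϕ) p (0, 1)) :=
    (ContDiff.fderiv_right H (by simp)).clm_apply contDiff_const
  have e := funext fun p : ℝ × ℝ => H.eqX p.1 p.2
  unfold Sm2
  rw [e]
  exact this
theorem Sm2.sT {ϕ} (H : Sm2 ϕ) : Sm2 (etaT ϕ) := by
  have : ContDiff ℝ (⊤ : ℕ∞) (fun p => fderiv ℝ (un2 ϕ) p (1, 0)) :=
    (ContDiff.fderiv_right H (by simp)).clm_apply contDiff_const
  have e := funext fun p : ℝ × ℝ => H.eqT p.1 p.2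
  unfold Sm2
  rw [e]
  exact this

theorem ww_symm {E : Type*} [NormedAddCommGroup E] [NormedSpace ℝ E] {f : E → ℝ}
    (hf : ContDiff ℝ (⊤ : ℕ∞) f) (p v w : E) :
    fderiv ℝ (fun q => fderiv ℝ f q v) p w = fderiv ℝ (fun q => fderiv ℝ f q w) p v := by
  have hs : IsSymmSndFDerivAt ℝ f p := hf.contDiffAt.isSymmSndFDerivAt (by
    simp only [minSmoothness_of_isRCLikeNormedField]; exact WithTop.coe_le_coe.2 (le_top : (2 : ℕ∞) ≤ ⊤))
  have hd : DifferentiableAt ℝ (fderiv ℝ f) p :=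
    ((hf.fderiv_right (m := (⊤ : ℕ∞)) (by simp)).differentiable (by simp)) p
  have key : ∀ v w, fderiv ℝ (fun q => fderiv ℝ f q v) p w = fderiv ℝ (fderiv ℝ f) p w v := by
    intro v w
    rw [fderiv_clm_apply hd (differentiableAt_const v)]
    simp
  rw [key, key]
  exact hs w v

theorem Sm3.symXY {ϕ} (H : Sm3 ϕ) (t x y) : phiX (phiY ϕ) t x y = phiY (phiX ϕ) t x y := by
  rw [H.sY.eqX, H.sX.eqY,
    show un3 (phiY ϕ) = fun q => fderiv ℝ (un3 ϕ) q (0,0,1) from funext fun _ => H.eqY _ _ _,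
    show un3 (phiX ϕ) = fun q => fderiv ℝ (un3 ϕ) q (0,1,0) from funext fun _ => H.eqX _ _ _]
  exact ww_symm H _ _ _
theorem Sm3.symTX {ϕ} (H : Sm3 ϕ) (t x y) : phiT (phiX ϕ) t x y = phiX (phiT ϕ) t x y := by
  rw [H.sX.eqT, H.sT.eqX,
    show un3 (phiT ϕ) = fun q => fderiv ℝ (un3 ϕ) q (1,0,0) from funext fun _ => H.eqT _ _ _,
    show un3 (phiX ϕ) = fun q => fderiv ℝ (un3 ϕ) q (0,1,0) from funext fun _ => H.eqX _ _ _]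
  exact ww_symm H _ _ _
theorem Sm3.symTY {ϕ} (H : Sm3 ϕ) (t x y) : phiT (phiY ϕ) t x y = phiY (phiT ϕ) t x y := by
  rw [H.sY.eqT, H.sT.eqY,
    show un3 (phiT ϕ) = fun q => fderiv ℝ (un3 ϕ) q (1,0,0) from funext fun _ => H.eqT _ _ _,
    show un3 (phiY ϕ) = fun q => fderiv ℝ (un3 ϕ) q (0,0,1) from funext fun _ => H.eqY _ _ _]
  exact ww_symm H _ _ _
theorem Sm2.symTX {ϕ} (H : Sm2 ϕ) (t x) : etaT (etaX ϕ) t x = etaX (etaT ϕ) t x := by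
  rw [H.sX.eqT, H.sT.eqX,
    show un2 (etaT ϕ) = fun q => fderiv ℝ (un2 ϕ) q (1,0) from funext fun _ => H.eqT _ _,
    show un2 (etaX ϕ) = fun q => fderiv ℝ (un2 ϕ) q (0,1) from funext fun _ => H.eqX _ _]
  exact ww_symm H _ _ _

theorem Sm3.dX {ϕ} (H : Sm3 ϕ) (t x y) : HasDerivAt (fun x' => ϕ t x' y) (phiX ϕ t x y) x := by
  simpa using H.comp (hasDerivAt_const x t) (hasDerivAt_id x) (hasDerivAt_const x y)
theorem Sm3.dY {ϕ} (H : Sm3 ϕ) (t x y) : HasDerivAt (fun y' => ϕ t x y') (phiY ϕ t x y) y := by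
  simpa using H.comp (hasDerivAt_const y t) (hasDerivAt_const y x) (hasDerivAt_id y)
theorem Sm3.dT {ϕ} (H : Sm3 ϕ) (t x y) : HasDerivAt (fun s => ϕ s x y) (phiT ϕ t x y) t := by
  simpa using H.comp (hasDerivAt_id t) (hasDerivAt_const t x) (hasDerivAt_const t y)
theorem Sm2.dX {ϕ} (H : Sm2 ϕ) (t x) : HasDerivAt (fun x' => ϕ t x') (etaX ϕ t x) x := by
  rw [H.eqX]; exact H.comp0 (hasDerivAt_const x t) (hasDerivAt_id x)
theorem Sm2.dT {ϕ} (H : Sm2 ϕ) (t x) : HasDerivAt (fun s => ϕ s x) (etaT ϕ t x) t := by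
  rw [H.eqT]; exact H.comp0 (hasDerivAt_id t) (hasDerivAt_const t x)

theorem ww_psi_sm {η ϕ} (h2 : Sm2 η) (h3 : Sm3 ϕ) : Sm2 (psi η ϕ) := by
  have : ContDiff ℝ (⊤ : ℕ∞) (un3 ϕ ∘ fun p : ℝ × ℝ => (p.1, p.2, η p.1 p.2)) :=
    ContDiff.comp h3 (contDiff_fst.prodMk (contDiff_snd.prodMk h2))
  exact this
theorem ww_psiX {η ϕ} (h2 : Sm2 η) (h3 : Sm3 ϕ) (t x) :
    etaX (psi η ϕ) t x = phiX ϕ t x (η t x) + etaX η t x * phiY ϕ t x (η t x) := by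
  have := (h3.comp (hasDerivAt_const x t) (hasDerivAt_id x) (h2.dX t x)).deriv
  simp only [zero_mul, zero_add, one_mul] at this
  exact this
theorem ww_psiT {η ϕ} (h2 : Sm2 η) (h3 : Sm3 ϕ) (t x) :
    etaT (psi η ϕ) t x = phiT ϕ t x (η t x) + etaT η t x * phiY ϕ t x (η t x) := by
  have := (h3.comp (hasDerivAt_id t) (hasDerivAt_const t x) (h2.dT t x)).deriv
  simp only [zero_mul, add_zero, one_mul] at this
  exact this

/-- divergence theorem under a graph -/
theorem ww_div (L c : ℝ) (a a' : ℝ → ℝ) (ha : ∀ x, HasDerivAt a (a' x) x) (ha' : Continuous a')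
    (F Fx G Gy : ℝ → ℝ → ℝ) (hF : Continuous (fun p : ℝ × ℝ => F p.1 p.2))
    (hFx : Continuous (fun p : ℝ × ℝ => Fx p.1 p.2))
    (hG : Continuous (fun p : ℝ × ℝ => G p.1 p.2))
    (hGy : Continuous (fun p : ℝ × ℝ => Gy p.1 p.2))
    (hdF : ∀ x y, HasDerivAt (fun s => F s y) (Fx x y) x)
    (hdG : ∀ x y, HasDerivAt (fun s => G x s) (Gy x y) y) :
    (∫ x in (0:ℝ)..L, ∫ y in c..a x, (Fx x y + Gy x y)) =
      (∫ x in (0:ℝ)..L, (G x (a x) - a' x * F x (a x))) - (∫ x in (0:ℝ)..L, G x c)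
      + (∫ y in c..a L, F L y) - ∫ y in c..a 0, F 0 y := by
  have hac : Continuous a := continuous_iff_continuousAt.2 fun x => (ha x).continuousAt
  have hsec : ∀ (u : ℝ → ℝ → ℝ), Continuous (fun p : ℝ × ℝ => u p.1 p.2) → ∀ t, Continuous (u t) :=
    fun u hu t => hu.comp (by fun_prop : Continuous fun x : ℝ => (t, x))
  have hcF : Continuous fun x => F x (a x) := hF.comp (continuous_id.prodMk hac)
  have hcG : Continuous fun x => G x (a x) := hG.comp (continuous_id.prodMk hac)
  have hcG0 : Continuous fun x => G x c := hG.comp (continuous_id.prodMk continuous_const)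
  have hcI : Continuous fun x => ∫ y in c..a x, Fx x y :=
    intervalIntegral.continuous_parametric_intervalIntegral_of_continuous hFx hac
  have hcGG : Continuous fun x => G x (a x) - G x c := hcG.sub hcG0
  have hcP : Continuous fun x => a' x * F x (a x) := ha'.mul hcF
  have hd := fun x => ww_leib F Fx hF hFx hdF c x a (a' x) hac (ha x)
  have ftc := intervalIntegral.integral_eq_sub_of_hasDerivAt (a := 0) (b := L) (fun x _ => hd x)
    ((hcI.add hcP).intervalIntegrable _ _)
  have hin : ∀ x, (∫ y in c..a x, (Fx x y + Gy x y)) =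
      (∫ y in c..a x, Fx x y) + (G x (a x) - G x c) := by
    intro x
    rw [intervalIntegral.integral_add ((hsec Fx hFx x).intervalIntegrable _ _)
      ((hsec Gy hGy x).intervalIntegrable _ _),
      intervalIntegral.integral_eq_sub_of_hasDerivAt (fun y _ => hdG x y)
        ((hsec Gy hGy x).intervalIntegrable _ _)]
  simp_rw [hin]
  rw [intervalIntegral.integral_add (hcI.intervalIntegrable _ _)
    (hcP.intervalIntegrable _ _)] at ftc
  rw [intervalIntegral.integral_add (hcI.intervalIntegrable _ _)
    (hcGG.intervalIntegrable _ _),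
    intervalIntegral.integral_sub (hcG.intervalIntegrable _ _) (hcG0.intervalIntegrable _ _),
    intervalIntegral.integral_sub (hcG.intervalIntegrable _ _)
      (hcP.intervalIntegrable _ _)]
  linarith

theorem Sm3.cc {ϕ} (H : Sm3 ϕ) : Continuous (fun p : ℝ × ℝ × ℝ => ϕ p.1 p.2.1 p.2.2) :=
  ContDiff.continuous H
theorem Sm2.cc {ϕ} (H : Sm2 ϕ) : Continuous (fun p : ℝ × ℝ => ϕ p.1 p.2) :=
  ContDiff.continuous H

theorem ww_sq {f : ℝ → ℝ} {f' x : ℝ} (hf : HasDerivAt f f' x) :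
    HasDerivAt (fun s => (f s) ^ 2) (2 * f x * f') x := by
  have := hf.fun_pow 2
  simpa using this

theorem ww_div2 (L c : ℝ) (hL : 0 ≤ L) (a a' : ℝ → ℝ) (ha : ∀ x, HasDerivAt a (a' x) x)
    (ha' : Continuous a') (hca : ∀ x ∈ Icc 0 L, c ≤ a x)
    (F Fx G Gy : ℝ → ℝ → ℝ) (hF : Continuous (fun p : ℝ × ℝ => F p.1 p.2))
    (hFx : Continuous (fun p : ℝ × ℝ => Fx p.1 p.2))
    (hG : Continuous (fun p : ℝ × ℝ => G p.1 p.2))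
    (hGy : Continuous (fun p : ℝ × ℝ => Gy p.1 p.2))
    (hdF : ∀ x y, HasDerivAt (fun s => F s y) (Fx x y) x)
    (hdG : ∀ x y, HasDerivAt (fun s => G x s) (Gy x y) y)
    (D : ℝ → ℝ → ℝ) (S Bt R : ℝ → ℝ)
    (hD : ∀ x ∈ Icc 0 L, ∀ y ∈ Icc c (a x), Fx x y + Gy x y = D x y)
    (hS : ∀ x ∈ Icc 0 L, G x (a x) - a' x * F x (a x) = S x)
    (hB : ∀ x ∈ Icc 0 L, - G x c = Bt x)
    (hR : ∀ y ∈ Icc c (a L), F L y = R y)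
    (h0 : ∀ y ∈ Icc c (a 0), F 0 y = 0) :
    (∫ x in (0:ℝ)..L, ∫ y in c..a x, D x y) =
      (∫ x in (0:ℝ)..L, S x) + (∫ x in (0:ℝ)..L, Bt x) + (∫ y in c..a L, R y) := by
  have key := ww_div L c a a' ha ha' F Fx G Gy hF hFx hG hGy hdF hdG
  have e1 : (∫ x in (0:ℝ)..L, ∫ y in c..a x, (Fx x y + Gy x y)) =
      ∫ x in (0:ℝ)..L, ∫ y in c..a x, D x y := by
    refine intervalIntegral.integral_congr fun x hx => ?_
    rw [uIcc_of_le hL] at hx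
    refine intervalIntegral.integral_congr fun y hy => ?_
    rw [uIcc_of_le (hca x hx)] at hy
    exact hD x hx y hy
  have e2 : (∫ x in (0:ℝ)..L, (G x (a x) - a' x * F x (a x))) = ∫ x in (0:ℝ)..L, S x := by
    refine intervalIntegral.integral_congr fun x hx => ?_
    rw [uIcc_of_le hL] at hx
    exact hS x hx
  have e3 : -(∫ x in (0:ℝ)..L, G x c) = ∫ x in (0:ℝ)..L, Bt x := by
    rw [← intervalIntegral.integral_neg]
    refine intervalIntegral.integral_congr fun x hx => ?_
    rw [uIcc_of_le hL] at hx
    exact hB x hx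
  have e4 : (∫ y in c..a L, F L y) = ∫ y in c..a L, R y := by
    refine intervalIntegral.integral_congr fun y hy => ?_
    rw [uIcc_of_le (hca L ⟨hL, le_rfl⟩)] at hy
    exact hR y hy
  have e5 : (∫ y in c..a 0, F 0 y) = ∫ y in c..a 0, (0:ℝ) := by
    refine intervalIntegral.integral_congr fun y hy => ?_
    rw [uIcc_of_le (hca 0 ⟨le_rfl, hL⟩)] at hy
    exact h0 y hy
  rw [intervalIntegral.integral_zero] at e5
  rw [e1, e2, e4, e5] at key
  linarith

theorem ww_lin (L c α β : ℝ) (a : ℝ → ℝ) (ha : Continuous a) (f k : ℝ → ℝ → ℝ)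
    (hf : Continuous (fun p : ℝ × ℝ => f p.1 p.2)) (hk : Continuous (fun p : ℝ × ℝ => k p.1 p.2)) :
    (∫ x in (0:ℝ)..L, ∫ y in c..a x, (α * f x y + β * k x y)) =
      α * (∫ x in (0:ℝ)..L, ∫ y in c..a x, f x y) + β * ∫ x in (0:ℝ)..L, ∫ y in c..a x, k x y := by
  have hsec : ∀ (u : ℝ → ℝ → ℝ), Continuous (fun p : ℝ × ℝ => u p.1 p.2) → ∀ t, Continuous (u t) :=
    fun u hu t => hu.comp (by fun_prop : Continuous fun x : ℝ => (t, x))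
  have hcI : ∀ (u : ℝ → ℝ → ℝ), Continuous (fun p : ℝ × ℝ => u p.1 p.2) →
      Continuous fun x => ∫ y in c..a x, u x y := fun u hu =>
    intervalIntegral.continuous_parametric_intervalIntegral_of_continuous hu ha
  have hin : ∀ x, (∫ y in c..a x, (α * f x y + β * k x y)) =
      α * (∫ y in c..a x, f x y) + β * ∫ y in c..a x, k x y := by
    intro x
    rw [intervalIntegral.integral_add (((hsec f hf x).intervalIntegrable _ _).const_mul _)
      (((hsec k hk x).intervalIntegrable _ _).const_mul _),
      intervalIntegral.integral_const_mul, intervalIntegral.integral_const_mul]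
  simp_rw [hin]
  rw [intervalIntegral.integral_add (((hcI f hf).intervalIntegrable _ _).const_mul _)
      (((hcI k hk).intervalIntegrable _ _).const_mul _),
      intervalIntegral.integral_const_mul, intervalIntegral.integral_const_mul]

/-- the nonlinear term -/
def NN (η : ℝ → ℝ → ℝ) (ϕ : ℝ → ℝ → ℝ → ℝ) (t x : ℝ) : ℝ :=
  1 / 2 * ((phiX ϕ t x (η t x)) ^ 2 - (phiY ϕ t x (η t x)) ^ 2)
    + etaX η t x * phiX ϕ t x (η t x) * phiY ϕ t x (η t x)
/-- the horizontal flux -/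
def SS (η : ℝ → ℝ → ℝ) (ϕ : ℝ → ℝ → ℝ → ℝ) (t x : ℝ) : ℝ :=
  x * (phiX ϕ t x (η t x) * phiY ϕ t x (η t x)
    + 1 / 2 * etaX η t x * ((phiY ϕ t x (η t x)) ^ 2 - (phiX ϕ t x (η t x)) ^ 2))

section ids
variable {L₁ h g T : ℝ} {η : ℝ → ℝ → ℝ} {ϕ : ℝ → ℝ → ℝ → ℝ}

theorem ww_low (hh : 0 < h) (hsol : IsWW2D L₁ h g T η ϕ) {t : ℝ} (ht : t ∈ Icc 0 T) :
    ∀ x ∈ Icc 0 L₁, -h ≤ η t x := fun x hx => by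
  have := hsol.eta_lower t ht x hx
  linarith

theorem ww_D1 (hL : 0 < L₁) (hh : 0 < h) (hsol : IsWW2D L₁ h g T η ϕ) {t : ℝ} (ht : t ∈ Icc 0 T) :
    (∫ x in (0:ℝ)..L₁, ∫ y in (-h)..η t x,
      (1 / 2 * (phiX ϕ t x y) ^ 2 + (-1 / 2) * (phiY ϕ t x y) ^ 2)) =
      (∫ x in (0:ℝ)..L₁, SS η ϕ t x) + (∫ x in (0:ℝ)..L₁, (0:ℝ))
      + ∫ y in (-h)..η t L₁, (-L₁ / 2) * (phiY ϕ t L₁ y) ^ 2 := by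
  have h2 : Sm2 η := hsol.smooth_eta
  have h3 : Sm3 ϕ := hsol.smooth_phi
  have c1 := h3.sX.cc
  have c2 := h3.sY.cc
  have c3 := h3.sX.sX.cc
  have c4 := h3.sX.sY.cc
  have c5 := h3.sY.sX.cc
  have c6 := h3.sY.sY.cc
  have c7 := h2.sX.cc
  refine ww_div2 L₁ (-h) hL.le (η t) (etaX η t) (fun x => h2.dX t x) (by fun_prop) (ww_low hh hsol ht)
    (fun x y => x * (1 / 2 * ((phiX ϕ t x y) ^ 2 - (phiY ϕ t x y) ^ 2)))
    (fun x y => 1 * (1 / 2 * ((phiX ϕ t x y) ^ 2 - (phiY ϕ t x y) ^ 2))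
      + x * (1 / 2 * (2 * phiX ϕ t x y * phiX (phiX ϕ) t x y
        - 2 * phiY ϕ t x y * phiX (phiY ϕ) t x y)))
    (fun x y => x * (phiX ϕ t x y * phiY ϕ t x y))
    (fun x y => x * (phiY (phiX ϕ) t x y * phiY ϕ t x y + phiX ϕ t x y * phiY (phiY ϕ) t x y))
    (by fun_prop) (by fun_prop) (by fun_prop) (by fun_prop) ?_ ?_ _ _ _ _ ?_ ?_ ?_ ?_ ?_
  · intro x y
    have a1 := ww_sq (h3.sX.dX t x y)
    have a2 := ww_sq (h3.sY.dX t x y)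
    have := (hasDerivAt_id x).mul ((a1.sub a2).const_mul (1 / 2))
    exact this
  · intro x y
    exact ((h3.sX.dY t x y).mul (h3.sY.dY t x y)).const_mul x
  · intro x hx y hy
    have := hsol.laplace t ht x hx y hy
    change phiX (phiX ϕ) t x y + phiY (phiY ϕ) t x y = 0 at this
    rw [h3.symXY]
    linear_combination x * phiX ϕ t x y * this
  · intro x hx
    simp only [SS]
    ring
  · intro x hx
    simp [hsol.bc_bottom t ht x hx]
  · intro y hy
    simp only [hsol.bc_right t ht y hy]
    ring
  · intro y hy
    simp

theorem ww_D2 (hL : 0 < L₁) (hh : 0 < h) (hsol : IsWW2D L₁ h g T η ϕ) {t : ℝ} (ht : t ∈ Icc 0 T) :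
    (∫ x in (0:ℝ)..L₁, ∫ y in (-h)..η t x,
      (1 / 2 * (phiY ϕ t x y) ^ 2 + (-1 / 2) * (phiX ϕ t x y) ^ 2)) =
      (∫ x in (0:ℝ)..L₁, (-1) * (η t x * NN η ϕ t x))
      + (∫ x in (0:ℝ)..L₁, (-h / 2) * (phiX ϕ t x (-h)) ^ 2)
      + ∫ y in (-h)..η t L₁, (0:ℝ) := by
  have h2 : Sm2 η := hsol.smooth_eta
  have h3 : Sm3 ϕ := hsol.smooth_phi
  have c1 := h3.sX.cc
  have c2 := h3.sY.cc
  have c3 := h3.sX.sX.cc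
  have c4 := h3.sX.sY.cc
  have c5 := h3.sY.sX.cc
  have c6 := h3.sY.sY.cc
  have c7 := h2.sX.cc
  refine ww_div2 L₁ (-h) hL.le (η t) (etaX η t) (fun x => h2.dX t x) (by fun_prop) (ww_low hh hsol ht)
    (fun x y => y * (phiX ϕ t x y * phiY ϕ t x y))
    (fun x y => y * (phiX (phiX ϕ) t x y * phiY ϕ t x y + phiX ϕ t x y * phiX (phiY ϕ) t x y))
    (fun x y => y * (1 / 2 * ((phiY ϕ t x y) ^ 2 - (phiX ϕ t x y) ^ 2)))
    (fun x y => 1 * (1 / 2 * ((phiY ϕ t x y) ^ 2 - (phiX ϕ t x y) ^ 2))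
      + y * (1 / 2 * (2 * phiY ϕ t x y * phiY (phiY ϕ) t x y
        - 2 * phiX ϕ t x y * phiY (phiX ϕ) t x y)))
    (by fun_prop) (by fun_prop) (by fun_prop) (by fun_prop) ?_ ?_ _ _ _ _ ?_ ?_ ?_ ?_ ?_
  · intro x y
    exact ((h3.sX.dX t x y).mul (h3.sY.dX t x y)).const_mul y
  · intro x y
    have a1 := ww_sq (h3.sX.dY t x y)
    have a2 := ww_sq (h3.sY.dY t x y)
    have := (hasDerivAt_id y).mul ((a2.sub a1).const_mul (1 / 2))
    exact this
  · intro x hx y hy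
    have := hsol.laplace t ht x hx y hy
    change phiX (phiX ϕ) t x y + phiY (phiY ϕ) t x y = 0 at this
    rw [h3.symXY]
    linear_combination y * phiY ϕ t x y * this
  · intro x hx
    simp only [NN]
    ring
  · intro x hx
    simp only [hsol.bc_bottom t ht x hx]
    ring
  · intro y hy
    simp [hsol.bc_right t ht y hy]
  · intro y hy
    simp [hsol.bc_left t ht y hy]

theorem ww_D3 (hL : 0 < L₁) (hh : 0 < h) (hsol : IsWW2D L₁ h g T η ϕ) {t : ℝ} (ht : t ∈ Icc 0 T) :
    (∫ x in (0:ℝ)..L₁, ∫ y in (-h)..η t x,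
      (etaX η t x * phiX ϕ t x y * phiY ϕ t x y)) =
      (∫ x in (0:ℝ)..L₁, (-1) * (η t x * NN η ϕ t x))
      + (∫ x in (0:ℝ)..L₁, (1 / 2) * (η t x * (phiX ϕ t x (-h)) ^ 2))
      + ∫ y in (-h)..η t L₁, (0:ℝ) := by
  have h2 : Sm2 η := hsol.smooth_eta
  have h3 : Sm3 ϕ := hsol.smooth_phi
  have c1 := h3.sX.cc
  have c2 := h3.sY.cc
  have c3 := h3.sX.sX.cc
  have c4 := h3.sX.sY.cc
  have c5 := h3.sY.sX.cc
  have c6 := h3.sY.sY.cc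
  have c7 := h2.sX.cc
  have c8 := h2.cc
  refine ww_div2 L₁ (-h) hL.le (η t) (etaX η t) (fun x => h2.dX t x) (by fun_prop) (ww_low hh hsol ht)
    (fun x y => η t x * (phiX ϕ t x y * phiY ϕ t x y))
    (fun x y => etaX η t x * (phiX ϕ t x y * phiY ϕ t x y)
      + η t x * (phiX (phiX ϕ) t x y * phiY ϕ t x y + phiX ϕ t x y * phiX (phiY ϕ) t x y))
    (fun x y => η t x * (1 / 2 * ((phiY ϕ t x y) ^ 2 - (phiX ϕ t x y) ^ 2)))
    (fun x y => η t x * (1 / 2 * (2 * phiY ϕ t x y * phiY (phiY ϕ) t x y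
        - 2 * phiX ϕ t x y * phiY (phiX ϕ) t x y)))
    (by fun_prop) (by fun_prop) (by fun_prop) (by fun_prop) ?_ ?_ _ _ _ _ ?_ ?_ ?_ ?_ ?_
  · intro x y
    exact (h2.dX t x).mul ((h3.sX.dX t x y).mul (h3.sY.dX t x y))
  · intro x y
    have a1 := ww_sq (h3.sX.dY t x y)
    have a2 := ww_sq (h3.sY.dY t x y)
    have := ((a2.sub a1).const_mul (1 / 2)).const_mul (η t x)
    exact this
  · intro x hx y hy
    have := hsol.laplace t ht x hx y hy
    change phiX (phiX ϕ) t x y + phiY (phiY ϕ) t x y = 0 at this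
    rw [h3.symXY]
    linear_combination η t x * phiY ϕ t x y * this
  · intro x hx
    simp only [NN]
    ring
  · intro x hx
    simp only [hsol.bc_bottom t ht x hx]
    ring
  · intro y hy
    simp [hsol.bc_right t ht y hy]
  · intro y hy
    simp [hsol.bc_left t ht y hy]

/-- identity for `div (u grad phi)` with a smooth `u` -/
theorem ww_D4 (hL : 0 < L₁) (hh : 0 < h) (hsol : IsWW2D L₁ h g T η ϕ) {t : ℝ} (ht : t ∈ Icc 0 T)
    (u : ℝ → ℝ → ℝ → ℝ) (hu : Sm3 u) :
    (∫ x in (0:ℝ)..L₁, ∫ y in (-h)..η t x,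
      (phiX u t x y * phiX ϕ t x y + phiY u t x y * phiY ϕ t x y)) =
      (∫ x in (0:ℝ)..L₁, u t x (η t x) * etaT η t x)
      + (∫ x in (0:ℝ)..L₁, (0:ℝ))
      + ∫ y in (-h)..η t L₁, (0:ℝ) := by
  have h2 : Sm2 η := hsol.smooth_eta
  have h3 : Sm3 ϕ := hsol.smooth_phi
  have c1 := h3.sX.cc
  have c2 := h3.sY.cc
  have c3 := h3.sX.sX.cc
  have c6 := h3.sY.sY.cc
  have c7 := h2.sX.cc
  have c8 := hu.cc
  have c9 := hu.sX.cc
  have c10 := hu.sY.cc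
  refine ww_div2 L₁ (-h) hL.le (η t) (etaX η t) (fun x => h2.dX t x) (by fun_prop) (ww_low hh hsol ht)
    (fun x y => u t x y * phiX ϕ t x y)
    (fun x y => phiX u t x y * phiX ϕ t x y + u t x y * phiX (phiX ϕ) t x y)
    (fun x y => u t x y * phiY ϕ t x y)
    (fun x y => phiY u t x y * phiY ϕ t x y + u t x y * phiY (phiY ϕ) t x y)
    (by fun_prop) (by fun_prop) (by fun_prop) (by fun_prop) ?_ ?_ _ _ _ _ ?_ ?_ ?_ ?_ ?_
  · intro x y
    exact (hu.dX t x y).mul (h3.sX.dX t x y)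
  · intro x y
    exact (hu.dY t x y).mul (h3.sY.dY t x y)
  · intro x hx y hy
    have := hsol.laplace t ht x hx y hy
    change phiX (phiX ϕ) t x y + phiY (phiY ϕ) t x y = 0 at this
    linear_combination u t x y * this
  · intro x hx
    rw [hsol.kinematic t ht x hx]
    ring
  · intro x hx
    simp [hsol.bc_bottom t ht x hx]
  · intro y hy
    simp [hsol.bc_right t ht y hy]
  · intro y hy
    simp [hsol.bc_left t ht y hy]

theorem ww_energy_deriv (hL : 0 < L₁) (hh : 0 < h) (hsol : IsWW2D L₁ h g T η ϕ) {t : ℝ} :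
    HasDerivAt (energy2D L₁ h g η ϕ)
      (g / 2 * (∫ x in (0:ℝ)..L₁, 2 * η t x * etaT η t x)
       + 1 / 2 * ∫ x in (0:ℝ)..L₁, ((∫ y in (-h)..η t x,
          2 * (phiX (phiT ϕ) t x y * phiX ϕ t x y + phiY (phiT ϕ) t x y * phiY ϕ t x y))
          + etaT η t x * ((phiX ϕ t x (η t x)) ^ 2 + (phiY ϕ t x (η t x)) ^ 2))) t := by
  have h2 : Sm2 η := hsol.smooth_eta
  have h3 : Sm3 ϕ := hsol.smooth_phi
  have c1 := h3.sX.cc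
  have c2 := h3.sY.cc
  have c3 := h3.sT.sX.cc
  have c4 := h3.sT.sY.cc
  have c5 := h2.cc
  have c6 := h2.sT.cc
  refine HasDerivAt.add (HasDerivAt.const_mul _ ?_) (HasDerivAt.const_mul _ ?_)
  · refine ww_param (fun t x => (η t x) ^ 2) (fun t x => 2 * η t x * etaT η t x)
      (by fun_prop) (by fun_prop) ?_ _ _ _
    intro t x
    exact ww_sq (h2.dT t x)
  · refine ww_param (fun t x => ∫ y in (-h)..(η t x), ((phiX ϕ t x y) ^ 2 + (phiY ϕ t x y) ^ 2))
      (fun t x => (∫ y in (-h)..η t x,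
          2 * (phiX (phiT ϕ) t x y * phiX ϕ t x y + phiY (phiT ϕ) t x y * phiY ϕ t x y))
          + etaT η t x * ((phiX ϕ t x (η t x)) ^ 2 + (phiY ϕ t x (η t x)) ^ 2)) ?_ ?_ ?_ _ _ _
    · refine intervalIntegral.continuous_parametric_intervalIntegral_of_continuous
        (f := fun (p : ℝ × ℝ) y => (phiX ϕ p.1 p.2 y) ^ 2 + (phiY ϕ p.1 p.2 y) ^ 2) ?_ c5
      change Continuous fun q : (ℝ × ℝ) × ℝ => (phiX ϕ q.1.1 q.1.2 q.2) ^ 2 + (phiY ϕ q.1.1 q.1.2 q.2) ^ 2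
      fun_prop
    · refine Continuous.add ?_ (by fun_prop)
      refine intervalIntegral.continuous_parametric_intervalIntegral_of_continuous
        (f := fun (p : ℝ × ℝ) y => 2 * (phiX (phiT ϕ) p.1 p.2 y * phiX ϕ p.1 p.2 y
          + phiY (phiT ϕ) p.1 p.2 y * phiY ϕ p.1 p.2 y)) ?_ c5
      change Continuous fun q : (ℝ × ℝ) × ℝ => 2 * (phiX (phiT ϕ) q.1.1 q.1.2 q.2 * phiX ϕ q.1.1 q.1.2 q.2
          + phiY (phiT ϕ) q.1.1 q.1.2 q.2 * phiY ϕ q.1.1 q.1.2 q.2)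
      fun_prop
    · intro t x
      refine ww_leib (fun t y => (phiX ϕ t x y) ^ 2 + (phiY ϕ t x y) ^ 2)
        (fun t y => 2 * (phiX (phiT ϕ) t x y * phiX ϕ t x y + phiY (phiT ϕ) t x y * phiY ϕ t x y))
        (by fun_prop) (by fun_prop) ?_ _ _ (fun t => η t x) _ (by fun_prop) (h2.dT t x)
      intro t y
      have := (ww_sq (h3.sX.dT t x y)).add (ww_sq (h3.sY.dT t x y))
      rw [h3.symTX, h3.symTY] at this
      refine this.congr_deriv ?_
      ring

theorem ww_energy (hL : 0 < L₁) (hh : 0 < h) (hsol : IsWW2D L₁ h g T η ϕ) :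
    ∀ t ∈ Icc 0 T, energy2D L₁ h g η ϕ t = energy2D L₁ h g η ϕ 0 := by
  have h2 : Sm2 η := hsol.smooth_eta
  have h3 : Sm3 ϕ := hsol.smooth_phi
  have c1 := h3.sX.cc
  have c2 := h3.sY.cc
  have c3 := h3.sT.sX.cc
  have c4 := h3.sT.sY.cc
  have c5 := h2.cc
  have c6 := h2.sT.cc
  have c7 := h3.sT.cc
  refine constant_of_has_deriv_right_zero
    (fun t _ => (ww_energy_deriv hL hh hsol).continuousAt.continuousWithinAt) ?_
  intro t ht'
  have ht : t ∈ Icc 0 T := ⟨ht'.1, ht'.2.le⟩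
  have key := (ww_energy_deriv hL hh hsol (t := t)).hasDerivWithinAt (s := Ici t)
  convert key using 1
  have d := ww_D4 hL hh hsol ht (phiT ϕ) h3.sT
  simp only [intervalIntegral.integral_zero, add_zero] at d
  simp only [intervalIntegral.integral_const_mul]
  have hcI : Continuous fun x => ∫ y in (-h)..η t x,
      (phiX (phiT ϕ) t x y * phiX ϕ t x y + phiY (phiT ϕ) t x y * phiY ϕ t x y) := by
    refine intervalIntegral.continuous_parametric_intervalIntegral_of_continuous
        (f := fun x y => phiX (phiT ϕ) t x y * phiX ϕ t x y
          + phiY (phiT ϕ) t x y * phiY ϕ t x y) ?_ (by fun_prop)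
    change Continuous fun q : ℝ × ℝ => (phiX (phiT ϕ) t q.1 q.2 * phiX ϕ t q.1 q.2
          + phiY (phiT ϕ) t q.1 q.2 * phiY ϕ t q.1 q.2)
    fun_prop
  have hc2 : Continuous fun x =>
      etaT η t x * ((phiX ϕ t x (η t x)) ^ 2 + (phiY ϕ t x (η t x)) ^ 2) := by fun_prop
  rw [intervalIntegral.integral_add ((hcI.intervalIntegrable _ _).const_mul _)
    (hc2.intervalIntegrable _ _), intervalIntegral.integral_const_mul, d]
  have e : (∫ x in (0:ℝ)..L₁, phiT ϕ t x (η t x) * etaT η t x) =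
      ∫ x in (0:ℝ)..L₁, ((-1 / 2) * (etaT η t x * ((phiX ϕ t x (η t x)) ^ 2
        + (phiY ϕ t x (η t x)) ^ 2)) + (-g / 2) * (2 * η t x * etaT η t x)) := by
    refine intervalIntegral.integral_congr fun x hx => ?_
    rw [uIcc_of_le hL.le] at hx
    have := hsol.bernoulli t ht x hx
    change phiT ϕ t x (η t x) * etaT η t x = _
    linear_combination etaT η t x * this
  have hc3 : Continuous fun x => 2 * η t x * etaT η t x := by fun_prop
  rw [intervalIntegral.integral_add ((hc2.intervalIntegrable _ _).const_mul _)
    ((hc3.intervalIntegrable _ _).const_mul _), intervalIntegral.integral_const_mul,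
    intervalIntegral.integral_const_mul] at e
  linarith

end ids

def II (L : ℝ) (η : ℝ → ℝ → ℝ) (ϕ : ℝ → ℝ → ℝ → ℝ) (t : ℝ) : ℝ :=
  ∫ x in (0:ℝ)..L, η t x * (x * etaX (psi η ϕ) t x)
def II' (L : ℝ) (η : ℝ → ℝ → ℝ) (ϕ : ℝ → ℝ → ℝ → ℝ) (t : ℝ) : ℝ :=
  ∫ x in (0:ℝ)..L, (etaT η t x * (x * etaX (psi η ϕ) t x)
    + η t x * (x * etaT (etaX (psi η ϕ)) t x))
def JJ (L : ℝ) (η : ℝ → ℝ → ℝ) (ϕ : ℝ → ℝ → ℝ → ℝ) (t : ℝ) : ℝ :=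
  ∫ x in (0:ℝ)..L, η t x * psi η ϕ t x
def JJ' (L : ℝ) (η : ℝ → ℝ → ℝ) (ϕ : ℝ → ℝ → ℝ → ℝ) (t : ℝ) : ℝ :=
  ∫ x in (0:ℝ)..L, (etaT η t x * psi η ϕ t x + η t x * etaT (psi η ϕ) t x)

theorem ww_II {η ϕ} (h2 : Sm2 η) (h3 : Sm3 ϕ) (L t : ℝ) :
    HasDerivAt (II L η ϕ) (II' L η ϕ t) t := by
  have hp := ww_psi_sm h2 h3
  have c1 := h2.cc
  have c2 := h2.sT.cc
  have c3 := hp.sX.cc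
  have c4 := hp.sX.sT.cc
  refine ww_param (fun t x => η t x * (x * etaX (psi η ϕ) t x)) (fun t x =>
    (etaT η t x * (x * etaX (psi η ϕ) t x) + η t x * (x * etaT (etaX (psi η ϕ)) t x)))
    (by fun_prop) (by fun_prop) ?_ _ _ _
  intro t x
  exact (h2.dT t x).mul ((hp.sX.dT t x).const_mul x)

theorem ww_JJ {η ϕ} (h2 : Sm2 η) (h3 : Sm3 ϕ) (L t : ℝ) :
    HasDerivAt (JJ L η ϕ) (JJ' L η ϕ t) t := by
  have hp := ww_psi_sm h2 h3
  have c1 := h2.cc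
  have c2 := h2.sT.cc
  have c3 := hp.cc
  have c4 := hp.sT.cc
  refine ww_param (fun t x => η t x * psi η ϕ t x) (fun t x =>
    (etaT η t x * psi η ϕ t x + η t x * etaT (psi η ϕ) t x))
    (by fun_prop) (by fun_prop) ?_ _ _ _
  intro t x
  exact (h2.dT t x).mul (hp.dT t x)

theorem ww_IIc {η ϕ} (h2 : Sm2 η) (h3 : Sm3 ϕ) (L : ℝ) : Continuous (II' L η ϕ) := by
  have hp := ww_psi_sm h2 h3
  have c1 := h2.cc
  have c2 := h2.sT.cc
  have c3 := hp.sX.cc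
  have c4 := hp.sX.sT.cc
  refine intervalIntegral.continuous_parametric_intervalIntegral_of_continuous' (f := fun t x =>
    (etaT η t x * (x * etaX (psi η ϕ) t x) + η t x * (x * etaT (etaX (psi η ϕ)) t x))) ?_ _ _
  change Continuous fun q : ℝ × ℝ => (etaT η q.1 q.2 * (q.2 * etaX (psi η ϕ) q.1 q.2)
    + η q.1 q.2 * (q.2 * etaT (etaX (psi η ϕ)) q.1 q.2))
  fun_prop

theorem ww_JJc {η ϕ} (h2 : Sm2 η) (h3 : Sm3 ϕ) (L : ℝ) : Continuous (JJ' L η ϕ) := by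
  have hp := ww_psi_sm h2 h3
  have c1 := h2.cc
  have c2 := h2.sT.cc
  have c3 := hp.cc
  have c4 := hp.sT.cc
  refine intervalIntegral.continuous_parametric_intervalIntegral_of_continuous' (f := fun t x =>
    (etaT η t x * psi η ϕ t x + η t x * etaT (psi η ϕ) t x)) ?_ _ _
  change Continuous fun q : ℝ × ℝ => (etaT η q.1 q.2 * psi η ϕ q.1 q.2
    + η q.1 q.2 * etaT (psi η ϕ) q.1 q.2)
  fun_prop

section ids2
variable {L₁ h g T : ℝ} {η : ℝ → ℝ → ℝ} {ϕ : ℝ → ℝ → ℝ → ℝ}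

theorem ww_psit (hsol : IsWW2D L₁ h g T η ϕ) {t : ℝ} (ht : t ∈ Icc 0 T) {x : ℝ}
    (hx : x ∈ Icc 0 L₁) : etaT (psi η ϕ) t x = - g * η t x - NN η ϕ t x := by
  rw [ww_psiT hsol.smooth_eta hsol.smooth_phi, hsol.kinematic t ht x hx]
  simp only [NN]
  linear_combination hsol.bernoulli t ht x hx

theorem ww_theta (hL : 0 < L₁) (hsol : IsWW2D L₁ h g T η ϕ) {t : ℝ} (ht : t ∈ Icc 0 T) :
    L₁ * Theta g η ϕ t L₁ + II' L₁ η ϕ t =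
      (∫ x in (0:ℝ)..L₁, SS η ϕ t x) + (∫ x in (0:ℝ)..L₁, η t x * NN η ϕ t x)
        + g / 2 * ∫ x in (0:ℝ)..L₁, (η t x) ^ 2 := by
  have h2 : Sm2 η := hsol.smooth_eta
  have h3 : Sm3 ϕ := hsol.smooth_phi
  have hp := ww_psi_sm h2 h3
  have c1 := h2.cc
  have c2 := h2.sT.cc
  have c3 := hp.sX.cc
  have c4 := hp.sX.sT.cc
  have c5 := h2.sX.cc
  have c6 := hp.sT.cc
  have c7 := hp.sT.sX.cc
  have c8 := h3.sX.cc
  have c9 := h3.sY.cc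
  have ftc := intervalIntegral.integral_eq_sub_of_hasDerivAt (a := 0) (b := L₁)
    (f := fun x => x * (η t x * etaT (psi η ϕ) t x + g / 2 * (η t x) ^ 2))
    (f' := fun x => 1 * (η t x * etaT (psi η ϕ) t x + g / 2 * (η t x) ^ 2)
      + x * ((etaX η t x * etaT (psi η ϕ) t x + η t x * etaX (etaT (psi η ϕ)) t x)
        + g / 2 * (2 * η t x * etaX η t x)))
    (fun x _ => (hasDerivAt_id x).mul
      (((h2.dX t x).mul (hp.sT.dX t x)).add ((ww_sq (h2.dX t x)).const_mul (g / 2))))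
    (by apply Continuous.intervalIntegrable; fun_prop)
  have e1 : L₁ * Theta g η ϕ t L₁ = - (∫ x in (0:ℝ)..L₁,
      (1 * (η t x * etaT (psi η ϕ) t x + g / 2 * (η t x) ^ 2)
      + x * ((etaX η t x * etaT (psi η ϕ) t x + η t x * etaX (etaT (psi η ϕ)) t x)
        + g / 2 * (2 * η t x * etaX η t x)))) := by
    rw [ftc]
    simp only [Theta]
    change L₁ * (-η t L₁ * etaT (psi η ϕ) t L₁ - g / 2 * η t L₁ ^ 2) = _
    ring
  have cS : Continuous (SS η ϕ t) := by unfold SS; fun_prop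
  have cN : Continuous fun x => η t x * NN η ϕ t x := by unfold NN; fun_prop
  have cE : Continuous fun x => g / 2 * (η t x) ^ 2 := by fun_prop
  have cSN : Continuous fun x => SS η ϕ t x + η t x * NN η ϕ t x := cS.add cN
  rw [e1, II', ← intervalIntegral.integral_neg, ← intervalIntegral.integral_add
    (by apply Continuous.intervalIntegrable; fun_prop)
    (by apply Continuous.intervalIntegrable; fun_prop), ← intervalIntegral.integral_add
    (cS.intervalIntegrable _ _) (cN.intervalIntegrable _ _), ← intervalIntegral.integral_const_mul,
    ← intervalIntegral.integral_add (cSN.intervalIntegrable _ _)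
      (cE.intervalIntegrable _ _)]
  refine intervalIntegral.integral_congr fun x hx => ?_
  rw [uIcc_of_le hL.le] at hx
  simp only [hp.symTX]
  rw [ww_psit hsol ht hx, ww_psiX h2 h3, hsol.kinematic t ht x hx]
  simp only [SS, NN]
  ring

theorem ww_JJeq (hL : 0 < L₁) (hh : 0 < h) (hsol : IsWW2D L₁ h g T η ϕ) {t : ℝ} (ht : t ∈ Icc 0 T) :
    JJ' L₁ η ϕ t = (∫ x in (0:ℝ)..L₁, ∫ y in (-h)..η t x,
      ((phiX ϕ t x y) ^ 2 + (phiY ϕ t x y) ^ 2)) - (∫ x in (0:ℝ)..L₁, η t x * NN η ϕ t x)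
        - g * ∫ x in (0:ℝ)..L₁, (η t x) ^ 2 := by
  have h2 : Sm2 η := hsol.smooth_eta
  have h3 : Sm3 ϕ := hsol.smooth_phi
  have hp := ww_psi_sm h2 h3
  have c1 := h2.cc
  have c2 := h2.sT.cc
  have c3 := hp.cc
  have c5 := h2.sX.cc
  have c8 := h3.sX.cc
  have c9 := h3.sY.cc
  have d := ww_D4 hL hh hsol ht ϕ h3
  simp only [intervalIntegral.integral_zero, add_zero] at d
  simp only [pow_two (phiX _ _ _ _), pow_two (phiY _ _ _ _)]
  rw [d]
  have cS : Continuous fun x => ϕ t x (η t x) * etaT η t x := by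
    have : Continuous fun x => psi η ϕ t x * etaT η t x := by fun_prop
    exact this
  have cN : Continuous fun x => η t x * NN η ϕ t x := by unfold NN; fun_prop
  have cE : Continuous fun x => g * (η t x) ^ 2 := by fun_prop
  have cSN : Continuous fun x => ϕ t x (η t x) * etaT η t x - η t x * NN η ϕ t x := cS.sub cN
  rw [← intervalIntegral.integral_sub
    (cS.intervalIntegrable _ _) (cN.intervalIntegrable _ _), ← intervalIntegral.integral_const_mul,
    ← intervalIntegral.integral_sub (cSN.intervalIntegrable _ _)
      (cE.intervalIntegrable _ _), JJ']
  refine intervalIntegral.integral_congr fun x hx => ?_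
  rw [uIcc_of_le hL.le] at hx
  rw [ww_psit hsol ht hx]
  simp only [psi]
  ring

theorem ww_point (hL : 0 < L₁) (hh : 0 < h) (hg : 0 < g) (hsol : IsWW2D L₁ h g T η ϕ)
    {t : ℝ} (ht : t ∈ Icc 0 T) (B : ℝ) (hB : 0 < B)
    (hslope : ∀ x ∈ Icc (0:ℝ) L₁, |etaX η t x| ≤ B) :
    -(II' L₁ η ϕ t) - 1 / 4 * JJ' L₁ η ϕ t + energy2D L₁ h g η ϕ t * ((2 - 7 * B) / 4)
      + L₁ / 2 * (∫ y in (-h)..(η t L₁), (phiY ϕ t L₁ y) ^ 2)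
      + h / 16 * (∫ x in (0:ℝ)..L₁, (phiX ϕ t x (-h)) ^ 2) ≤ L₁ * Theta g η ϕ t L₁ := by
  have h2 : Sm2 η := hsol.smooth_eta
  have h3 : Sm3 ϕ := hsol.smooth_phi
  have c1 := h2.cc
  have c5 := h2.sX.cc
  have c8 := h3.sX.cc
  have c9 := h3.sY.cc
  have eT := ww_theta hL hsol ht
  have eJ := ww_JJeq hL hh hsol ht
  have e1 := ww_D1 hL hh hsol ht
  have e2 := ww_D2 hL hh hsol ht
  have e3 := ww_D3 hL hh hsol ht
  have cη : Continuous (η t) := by fun_prop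
  have cX : Continuous fun p : ℝ × ℝ => (phiX ϕ t p.1 p.2) ^ 2 := by fun_prop
  have cY : Continuous fun p : ℝ × ℝ => (phiY ϕ t p.1 p.2) ^ 2 := by fun_prop
  have l1 := ww_lin L₁ (-h) (1 / 2) (-1 / 2) (η t) cη (fun x y => (phiX ϕ t x y) ^ 2)
    (fun x y => (phiY ϕ t x y) ^ 2) cX cY
  have l2 := ww_lin L₁ (-h) (1 / 2) (-1 / 2) (η t) cη (fun x y => (phiY ϕ t x y) ^ 2)
    (fun x y => (phiX ϕ t x y) ^ 2) cY cX
  have l3 := ww_lin L₁ (-h) 1 1 (η t) cη (fun x y => (phiX ϕ t x y) ^ 2)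
    (fun x y => (phiY ϕ t x y) ^ 2) cX cY
  have l4 := ww_lin L₁ (-h) (B / 2) (B / 2) (η t) cη (fun x y => (phiX ϕ t x y) ^ 2)
    (fun x y => (phiY ϕ t x y) ^ 2) cX cY
  simp only [one_mul] at l3
  rw [l1] at e1
  rw [l2] at e2
  rw [l3] at eJ
  simp only [intervalIntegral.integral_zero, add_zero, intervalIntegral.integral_const_mul] at e1 e2 e3
  have hX : (∫ x in (0:ℝ)..L₁, ∫ y in (-h)..η t x, (etaX η t x * phiX ϕ t x y * phiY ϕ t x y)) ≤
      ∫ x in (0:ℝ)..L₁, ∫ y in (-h)..η t x,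
        (B / 2 * (phiX ϕ t x y) ^ 2 + B / 2 * (phiY ϕ t x y) ^ 2) := by
    refine intervalIntegral.integral_mono_on hL.le ?_ ?_ ?_
    · apply Continuous.intervalIntegrable
      refine intervalIntegral.continuous_parametric_intervalIntegral_of_continuous
        (f := fun x y => (etaX η t x * phiX ϕ t x y * phiY ϕ t x y)) ?_ cη
      change Continuous fun p : ℝ × ℝ => (etaX η t p.1 * phiX ϕ t p.1 p.2 * phiY ϕ t p.1 p.2)
      fun_prop
    · apply Continuous.intervalIntegrable
      refine intervalIntegral.continuous_parametric_intervalIntegral_of_continuous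
        (f := fun x y => (B / 2 * (phiX ϕ t x y) ^ 2 + B / 2 * (phiY ϕ t x y) ^ 2)) ?_ cη
      change Continuous fun p : ℝ × ℝ =>
        (B / 2 * (phiX ϕ t p.1 p.2) ^ 2 + B / 2 * (phiY ϕ t p.1 p.2) ^ 2)
      fun_prop
    · intro x hx
      refine intervalIntegral.integral_mono_on (ww_low hh hsol ht x hx) ?_ ?_ ?_
      · apply Continuous.intervalIntegrable; fun_prop
      · apply Continuous.intervalIntegrable; fun_prop
      · intro y _
        obtain ⟨s1, s2⟩ := abs_le.1 (hslope x hx)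
        nlinarith [mul_nonneg (by linarith : 0 ≤ B - etaX η t x)
          (sq_nonneg (phiX ϕ t x y + phiY ϕ t x y)),
          mul_nonneg (by linarith : 0 ≤ B + etaX η t x)
          (sq_nonneg (phiX ϕ t x y - phiY ϕ t x y))]
  rw [l4] at hX
  have hb : (-h / 2) * (∫ x in (0:ℝ)..L₁, (phiX ϕ t x (-h)) ^ 2) ≤
      ∫ x in (0:ℝ)..L₁, η t x * (phiX ϕ t x (-h)) ^ 2 := by
    rw [← intervalIntegral.integral_const_mul]
    refine intervalIntegral.integral_mono_on hL.le ?_ ?_ ?_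
    · apply Continuous.intervalIntegrable; fun_prop
    · apply Continuous.intervalIntegrable; fun_prop
    · intro x hx
      exact mul_le_mul_of_nonneg_right (hsol.eta_lower t ht x hx) (sq_nonneg _)
  have hP : 0 ≤ B * g * ∫ x in (0:ℝ)..L₁, (η t x) ^ 2 := by
    refine mul_nonneg (by positivity) (intervalIntegral.integral_nonneg hL.le fun x _ => sq_nonneg _)
  rw [energy2D, l3]
  nlinarith

theorem ww_cs (f : ℝ → ℝ) (hf : Continuous f) (x : ℝ) (hx : 0 ≤ x) :
    (∫ s in (0:ℝ)..x, f s) ^ 2 ≤ x * ∫ s in (0:ℝ)..x, (f s) ^ 2 := by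
  have key : ∀ m : ℝ, 0 ≤ x * (m * m) + (-2 * ∫ s in (0:ℝ)..x, f s) * m
      + ∫ s in (0:ℝ)..x, (f s) ^ 2 := by
    intro m
    have h0 : 0 ≤ ∫ s in (0:ℝ)..x, (f s - m) ^ 2 :=
      intervalIntegral.integral_nonneg hx fun s _ => sq_nonneg _
    have e : (∫ s in (0:ℝ)..x, (f s - m) ^ 2) =
        ∫ s in (0:ℝ)..x, ((f s) ^ 2 + ((-2 * m) * f s + m ^ 2)) :=
      intervalIntegral.integral_congr fun s _ => by ring
    have i1 : Continuous fun s => (f s) ^ 2 := by fun_prop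
    have i2 : Continuous fun s => (-2 * m) * f s := by fun_prop
    have i3 : Continuous fun s => (-2 * m) * f s + m ^ 2 := by fun_prop
    rw [intervalIntegral.integral_add (i1.intervalIntegrable _ _) (i3.intervalIntegrable _ _),
      intervalIntegral.integral_add (i2.intervalIntegrable _ _) intervalIntegrable_const,
      intervalIntegral.integral_const_mul, intervalIntegral.integral_const] at e
    rw [e] at h0
    simp only [sub_zero, smul_eq_mul] at h0
    linarith
  have := discrim_le_zero key
  unfold discrim at this
  linarith

theorem ww_amgm (L : ℝ) (hL : 0 ≤ L) (f k : ℝ → ℝ) (hf : Continuous f) (hk : Continuous k)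
    (P Q l : ℝ) (hl : 0 < l) (hP : (∫ x in (0:ℝ)..L, (f x) ^ 2) ≤ P)
    (hQ : (∫ x in (0:ℝ)..L, (k x) ^ 2) ≤ Q) :
    |∫ x in (0:ℝ)..L, f x * k x| ≤ 1 / 2 * (l * P + l⁻¹ * Q) := by
  have i1 : Continuous fun s => (l / 2) * (f s) ^ 2 := by fun_prop
  have i2 : Continuous fun s => (l⁻¹ / 2) * (k s) ^ 2 := by fun_prop
  have hb : (∫ x in (0:ℝ)..L, ((l / 2) * (f x) ^ 2 + (l⁻¹ / 2) * (k x) ^ 2)) ≤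
      1 / 2 * (l * P + l⁻¹ * Q) := by
    rw [intervalIntegral.integral_add (i1.intervalIntegrable _ _) (i2.intervalIntegrable _ _),
      intervalIntegral.integral_const_mul, intervalIntegral.integral_const_mul]
    have := mul_le_mul_of_nonneg_left hP hl.le
    have := mul_le_mul_of_nonneg_left hQ (inv_pos.2 hl).le
    linarith
  refine le_trans ?_ hb
  have := intervalIntegral.norm_integral_le_of_norm_le (f := fun x => f x * k x) (μ := volume)
    (g := fun x => ((l / 2) * (f x) ^ 2 + (l⁻¹ / 2) * (k x) ^ 2)) hL
    (Filter.Eventually.of_forall fun x _ => ?_) ((i1.add i2).intervalIntegrable _ _)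
  · exact this
  · have e : ∀ s : ℝ, (l / 2) * (f x) ^ 2 + (l⁻¹ / 2) * (k x) ^ 2 - f x * k x =
      (l⁻¹ / 2) * (l * f x - k x) ^ 2 := fun _ => by field_simp; ring
    have e' : (l / 2) * (f x) ^ 2 + (l⁻¹ / 2) * (k x) ^ 2 + f x * k x =
      (l⁻¹ / 2) * (l * f x + k x) ^ 2 := by field_simp; ring
    have p1 : 0 ≤ (l⁻¹ / 2) * (l * f x - k x) ^ 2 := by positivity
    have p2 : 0 ≤ (l⁻¹ / 2) * (l * f x + k x) ^ 2 := by positivity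
    rw [Real.norm_eq_abs, abs_le]
    constructor
    · linarith
    · linarith [e 0]

theorem ww_bounds (hL : 0 < L₁) (hh : 0 < h) (hg : 0 < g) (hsol : IsWW2D L₁ h g T η ϕ)
    {t : ℝ} (ht : t ∈ Icc 0 T) (A H : ℝ) (hA : 0 < A) (hH : H = energy2D L₁ h g η ϕ t)
    (hpsi : Real.sqrt (∫ x in (0:ℝ)..L₁, (psiX η ϕ t x) ^ 2) ≤ A * Real.sqrt (2 * H)) :
    |II L₁ η ϕ t| ≤ 2 * (L₁ * A / Real.sqrt g) * H ∧
      |JJ L₁ η ϕ t| ≤ 2 * (L₁ * A / Real.sqrt g) * H := by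
  have h2 : Sm2 η := hsol.smooth_eta
  have h3 : Sm3 ϕ := hsol.smooth_phi
  have hp := ww_psi_sm h2 h3
  have c1 := h2.cc
  have c2 := hp.cc
  have c3 := hp.sX.cc
  have cη : Continuous (η t) := by fun_prop
  have hk : 0 ≤ ∫ x in (0:ℝ)..L₁, ∫ y in (-h)..(η t x),
        ((phiX ϕ t x y) ^ 2 + (phiY ϕ t x y) ^ 2) :=
    intervalIntegral.integral_nonneg hL.le fun x hx =>
      intervalIntegral.integral_nonneg (ww_low hh hsol ht x hx) fun y _ => by positivity
  have hpp : 0 ≤ ∫ x in (0:ℝ)..L₁, (η t x) ^ 2 :=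
    intervalIntegral.integral_nonneg hL.le fun x _ => sq_nonneg _
  have hH0 : 0 ≤ H := by
    rw [hH, energy2D]; positivity
  have hP : (∫ x in (0:ℝ)..L₁, (η t x) ^ 2) ≤ 2 * H / g := by
    rw [le_div_iff₀ hg, hH, energy2D]
    linarith
  have hM0 : 0 ≤ ∫ x in (0:ℝ)..L₁, (etaX (psi η ϕ) t x) ^ 2 :=
    intervalIntegral.integral_nonneg hL.le fun x _ => sq_nonneg _
  have hM : (∫ x in (0:ℝ)..L₁, (etaX (psi η ϕ) t x) ^ 2) ≤ A ^ 2 * (2 * H) := by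
    have h1 : Real.sqrt (∫ x in (0:ℝ)..L₁, (etaX (psi η ϕ) t x) ^ 2) ≤ A * Real.sqrt (2 * H) := hpsi
    have := pow_le_pow_left₀ (Real.sqrt_nonneg _) h1 2
    rwa [Real.sq_sqrt hM0, mul_pow, Real.sq_sqrt (by linarith)] at this
  set M := ∫ x in (0:ℝ)..L₁, (etaX (psi η ϕ) t x) ^ 2 with hMdef
  have hsg : 0 < Real.sqrt g := Real.sqrt_pos.2 hg
  have hsg2 : Real.sqrt g ^ 2 = g := Real.sq_sqrt hg.le
  have hl : 0 < L₁ * A * Real.sqrt g := by positivity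
  have hconst : 1 / 2 * ((L₁ * A * Real.sqrt g) * (2 * H / g)
      + (L₁ * A * Real.sqrt g)⁻¹ * (L₁ ^ 2 * (A ^ 2 * (2 * H)))) =
      2 * (L₁ * A / Real.sqrt g) * H := by
    rw [← hsg2, Real.sqrt_sq hsg.le]
    field_simp
    ring
  have hLM := mul_le_mul_of_nonneg_left hM (sq_nonneg L₁)
  rw [← hconst]
  constructor
  · refine ww_amgm L₁ hL.le (η t) _ cη (by fun_prop) _ _ _ hl hP (le_trans ?_ hLM)
    rw [hMdef, ← intervalIntegral.integral_const_mul]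
    refine intervalIntegral.integral_mono_on hL.le ?_ ?_ ?_
    · apply Continuous.intervalIntegrable; fun_prop
    · apply Continuous.intervalIntegrable; fun_prop
    · intro x hx
      rw [mul_pow]
      exact mul_le_mul_of_nonneg_right (pow_le_pow_left₀ hx.1 hx.2 2) (sq_nonneg _)
  · have e : JJ L₁ η ϕ t = ∫ x in (0:ℝ)..L₁, η t x * (psi η ϕ t x - psi η ϕ t 0) := by
      have i1 : Continuous fun x => η t x * psi η ϕ t x := by fun_prop
      have i2 : Continuous fun x => η t x * psi η ϕ t 0 := by fun_prop
      simp only [mul_sub]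
      rw [intervalIntegral.integral_sub (i1.intervalIntegrable _ _) (i2.intervalIntegrable _ _),
        intervalIntegral.integral_mul_const, hsol.eta_mean t ht, zero_mul, sub_zero, JJ]
    rw [e]
    refine ww_amgm L₁ hL.le (η t) _ cη (by fun_prop) _ _ _ hl hP (le_trans ?_ hLM)
    have hb : (∫ x in (0:ℝ)..L₁, (psi η ϕ t x - psi η ϕ t 0) ^ 2) ≤
        ∫ x in (0:ℝ)..L₁, L₁ * M := by
      refine intervalIntegral.integral_mono_on hL.le ?_ intervalIntegrable_const ?_
      · apply Continuous.intervalIntegrable; fun_prop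
      · intro x hx
        have cx : Continuous (etaX (psi η ϕ) t) := by fun_prop
        have cx2 : Continuous fun x => (etaX (psi η ϕ) t x) ^ 2 := by fun_prop
        have ftc := intervalIntegral.integral_eq_sub_of_hasDerivAt (a := 0) (b := x)
          (fun x _ => hp.dX t x) (cx.intervalIntegrable _ _)
        rw [← ftc]
        refine (ww_cs _ cx x hx.1).trans ?_
        have hmono : (∫ s in (0:ℝ)..x, (etaX (psi η ϕ) t s) ^ 2) ≤ M := by
          have := intervalIntegral.integral_add_adjacent_intervals
            (cx2.intervalIntegrable (μ := volume) 0 x) (cx2.intervalIntegrable x L₁)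
          have h0 : 0 ≤ ∫ s in x..L₁, (etaX (psi η ϕ) t s) ^ 2 :=
            intervalIntegral.integral_nonneg hx.2 fun x _ => sq_nonneg _
          linarith
        exact mul_le_mul hx.2 hmono
          (intervalIntegral.integral_nonneg hx.1 fun x _ => sq_nonneg _) hL.le
    rw [intervalIntegral.integral_const, smul_eq_mul, sub_zero] at hb
    linarith

end ids2

/-- Corollary 1.4, observability under smallness of the slope and a
control of `‖∂ₓψ‖_{L²}` by `A√(2𝓗)`. -/
theorem observability_2d
    (L₁ h g T : ℝ) (hL : 0 < L₁) (hh : 0 < h) (hg : 0 < g) (hT0 : 0 < T)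
    (η : ℝ → ℝ → ℝ) (ϕ : ℝ → ℝ → ℝ → ℝ) (hsol : IsWW2D L₁ h g T η ϕ)
    (A B : ℝ) (hA : 0 < A) (hB : 0 < B) (hB7 : B < 2 / 7)
    (hT : T ≥ 4 / (2 - 7 * B) * (1 + 5 * L₁ * A / Real.sqrt g))
    (hslope : ∀ t ∈ Icc (0:ℝ) T, ∀ x ∈ Icc (0:ℝ) L₁, |etaX η t x| ≤ B)
    (hpsiL2 : ∀ t ∈ Icc (0:ℝ) T,
      Real.sqrt (∫ x in (0:ℝ)..L₁, (psiX η ϕ t x) ^ 2)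
        ≤ A * Real.sqrt (2 * energy2D L₁ h g η ϕ 0)) :
    L₁ * ∫ t in (0:ℝ)..T, Theta g η ϕ t L₁
      ≥ energy2D L₁ h g η ϕ 0
        + L₁ / 2 * (∫ t in (0:ℝ)..T, ∫ y in (-h)..(η t L₁), (phiY ϕ t L₁ y) ^ 2)
        + h / 16 * ∫ t in (0:ℝ)..T, ∫ x in (0:ℝ)..L₁, (phiX ϕ t x (-h)) ^ 2 := by
  have h2 : Sm2 η := hsol.smooth_eta
  have h3 : Sm3 ϕ := hsol.smooth_phi
  have hp := ww_psi_sm h2 h3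
  have c1 := h2.cc
  have c2 := hp.sT.cc
  have c3 := h3.sX.cc
  have c4 := h3.sY.cc
  have hE := ww_energy hL hh hsol
  set H := energy2D L₁ h g η ϕ 0 with hHdef
  have cR : Continuous fun t => ∫ y in (-h)..(η t L₁), (phiY ϕ t L₁ y) ^ 2 := by
    refine intervalIntegral.continuous_parametric_intervalIntegral_of_continuous
      (f := fun t y => (phiY ϕ t L₁ y) ^ 2) ?_ (by fun_prop)
    change Continuous fun p : ℝ × ℝ => (phiY ϕ p.1 L₁ p.2) ^ 2
    fun_prop
  have cb : Continuous fun t => ∫ x in (0:ℝ)..L₁, (phiX ϕ t x (-h)) ^ 2 := by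
    refine intervalIntegral.continuous_parametric_intervalIntegral_of_continuous'
      (f := fun t x => (phiX ϕ t x (-h)) ^ 2) ?_ _ _
    change Continuous fun p : ℝ × ℝ => (phiX ϕ p.1 p.2 (-h)) ^ 2
    fun_prop
  have cT : Continuous fun t => Theta g η ϕ t L₁ := by
    change Continuous fun t => -(η t L₁) * etaT (psi η ϕ) t L₁ - g / 2 * (η t L₁) ^ 2
    fun_prop
  have cI := ww_IIc h2 h3 L₁
  have cJ := ww_JJc h2 h3 L₁
  set R : ℝ → ℝ := fun t => ∫ y in (-h)..(η t L₁), (phiY ϕ t L₁ y) ^ 2 with hRdef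
  set b : ℝ → ℝ := fun t => ∫ x in (0:ℝ)..L₁, (phiX ϕ t x (-h)) ^ 2 with hbdef
  have mono : (∫ t in (0:ℝ)..T, ((((-1) * II' L₁ η ϕ t + (-1 / 4) * JJ' L₁ η ϕ t)
      + H * ((2 - 7 * B) / 4)) + L₁ / 2 * R t + h / 16 * b t)) ≤
      ∫ t in (0:ℝ)..T, L₁ * Theta g η ϕ t L₁ := by
    refine intervalIntegral.integral_mono_on hT0.le ?_ ?_ ?_
    · apply Continuous.intervalIntegrable; fun_prop
    · apply Continuous.intervalIntegrable; fun_prop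
    · intro t ht
      have := ww_point hL hh hg hsol ht B hB (hslope t ht)
      rw [hE t ht] at this
      simp only [hRdef, hbdef]
      linarith
  rw [intervalIntegral.integral_add (by apply Continuous.intervalIntegrable; fun_prop)
      (by apply Continuous.intervalIntegrable; fun_prop),
    intervalIntegral.integral_add (by apply Continuous.intervalIntegrable; fun_prop)
      (by apply Continuous.intervalIntegrable; fun_prop),
    intervalIntegral.integral_add (by apply Continuous.intervalIntegrable; fun_prop)
      (by apply Continuous.intervalIntegrable; fun_prop),
    intervalIntegral.integral_add (by apply Continuous.intervalIntegrable; fun_prop)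
      (by apply Continuous.intervalIntegrable; fun_prop)] at mono
  simp only [intervalIntegral.integral_const_mul, intervalIntegral.integral_const, smul_eq_mul,
    sub_zero] at mono
  rw [intervalIntegral.integral_eq_sub_of_hasDerivAt (fun t _ => ww_II h2 h3 L₁ t)
      (cI.intervalIntegrable _ _),
    intervalIntegral.integral_eq_sub_of_hasDerivAt (fun t _ => ww_JJ h2 h3 L₁ t)
      (cJ.intervalIntegrable _ _)] at mono
  have t0 : (0:ℝ) ∈ Icc 0 T := ⟨le_rfl, hT0.le⟩
  have tT : T ∈ Icc 0 T := ⟨hT0.le, le_rfl⟩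
  obtain ⟨i0, j0⟩ := ww_bounds hL hh hg hsol t0 A H hA (hE 0 t0).symm (hpsiL2 0 t0)
  obtain ⟨iT, jT⟩ := ww_bounds hL hh hg hsol tT A H hA (hE T tT).symm (hpsiL2 T tT)
  rw [abs_le] at i0 j0 iT jT
  have hH0 : 0 ≤ H := by
    have hk : 0 ≤ ∫ x in (0:ℝ)..L₁, ∫ y in (-h)..(η 0 x),
          ((phiX ϕ 0 x y) ^ 2 + (phiY ϕ 0 x y) ^ 2) :=
      intervalIntegral.integral_nonneg hL.le fun x hx =>
        intervalIntegral.integral_nonneg (ww_low hh hsol t0 x hx) fun y _ => by positivity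
    have hpp : 0 ≤ ∫ x in (0:ℝ)..L₁, (η 0 x) ^ 2 :=
      intervalIntegral.integral_nonneg hL.le fun x _ => sq_nonneg _
    rw [hHdef, energy2D]; positivity
  have h7 : 0 < 2 - 7 * B := by linarith
  have hTT : 1 + 5 * L₁ * A / Real.sqrt g ≤ T * ((2 - 7 * B) / 4) := by
    have := mul_le_mul_of_nonneg_right hT (by linarith : 0 ≤ (2 - 7 * B) / 4)
    refine le_trans (le_of_eq ?_) this
    field_simp
  have hTH := mul_le_mul_of_nonneg_right hTT hH0
  have e5 : (1 + 5 * L₁ * A / Real.sqrt g) * H = H + 5 * (L₁ * A / Real.sqrt g * H) := by ring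
  rw [e5] at hTH
  have e2 : 2 * (L₁ * A / Real.sqrt g) * H = 2 * (L₁ * A / Real.sqrt g * H) := by ring
  rw [e2] at i0 j0 iT jT
  change L₁ * (∫ t in (0:ℝ)..T, Theta g η ϕ t L₁) ≥
    H + L₁ / 2 * (∫ t in (0:ℝ)..T, R t) + h / 16 * ∫ t in (0:ℝ)..T, b t
  linarith [i0.1, i0.2, j0.1, j0.2, iT.1, iT.2, jT.1, jT.2]
end
end

section
/- Let (η, ϕ) be a smooth solution of the three-dimensional water-wave system on [0,T]. Then 𝓑(T) = (T/2)·𝓗 + P + I₁ + I₂ + I₃, where 𝓗 := 𝓗(0) (the energy 𝓗(t) being independent of t), P := (1/2)∫₀ᵀ [ L₁∫₀^{L₂}∫₋ₕ^{η(t,L₁,x₂)} |∇_{x,y}ϕ(t,L₁,x₂,y)|² dy dx₂ + L₂∫₀^{L₁}∫₋ₕ^{η(t,x₁,L₂)} |∇_{x,y}ϕ(t,x₁,L₂,y)|² dy dx₁ + h∬_Q |∇_{x,y}ϕ(t,x,−h)|² dx ] dt, I₁ := (9/8)∫₀ᵀ∬_Q η(t,x)·|∇ₓϕ(t,x,−h)|²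 dx dt, I₂ := −(9/4)∫₀ᵀ∭_{Ω(t)} (∂_yϕ)·(∇η·∇ₓϕ) dy dx dt, and I₃ := −(3/4)[∬_Q η ψ dx]ₜ₌₀^{t=T} − [∬_Q η·(x·∇ψ) dx]ₜ₌₀^{t=T}, with [F(t)]ₜ₌₀^{t=T} denoting F(T) − F(0). -/
open Real Set MeasureTheory

noncomputable section

/-- `∂_{x₁}ϕ(t,x₁,x₂,y)` -/
def phiX1 (ϕ : ℝ → ℝ → ℝ → ℝ → ℝ) (t x₁ x₂ y : ℝ) : ℝ := deriv (fun s => ϕ t s x₂ y) x₁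

/-- `∂_{x₂}ϕ(t,x₁,x₂,y)` -/
def phiX2 (ϕ : ℝ → ℝ → ℝ → ℝ → ℝ) (t x₁ x₂ y : ℝ) : ℝ := deriv (fun s => ϕ t x₁ s y) x₂

/-- `∂_yϕ(t,x₁,x₂,y)` -/
def phiY3 (ϕ : ℝ → ℝ → ℝ → ℝ → ℝ) (t x₁ x₂ y : ℝ) : ℝ := deriv (fun s => ϕ t x₁ x₂ s) y

/-- `∂ₜϕ(t,x₁,x₂,y)` -/
def phiT3 (ϕ : ℝ → ℝ → ℝ → ℝ → ℝ) (t x₁ x₂ y : ℝ) : ℝ := deriv (fun s => ϕ s x₁ x₂ y) t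

/-- `|∇_{x,y}ϕ|²(t,x₁,x₂,y)` -/
def gradSq3 (ϕ : ℝ → ℝ → ℝ → ℝ → ℝ) (t x₁ x₂ y : ℝ) : ℝ :=
  (phiX1 ϕ t x₁ x₂ y) ^ 2 + (phiX2 ϕ t x₁ x₂ y) ^ 2 + (phiY3 ϕ t x₁ x₂ y) ^ 2

/-- `|∇ₓϕ|²(t,x₁,x₂,y)` (horizontal gradient) -/
def gradXSq3 (ϕ : ℝ → ℝ → ℝ → ℝ → ℝ) (t x₁ x₂ y : ℝ) : ℝ :=
  (phiX1 ϕ t x₁ x₂ y) ^ 2 + (phiX2 ϕ t x₁ x₂ y) ^ 2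

/-- `∂_{x₁}η(t,x₁,x₂)` -/
def etaX1 (η : ℝ → ℝ → ℝ → ℝ) (t x₁ x₂ : ℝ) : ℝ := deriv (fun s => η t s x₂) x₁

/-- `∂_{x₂}η(t,x₁,x₂)` -/
def etaX2 (η : ℝ → ℝ → ℝ → ℝ) (t x₁ x₂ : ℝ) : ℝ := deriv (fun s => η t x₁ s) x₂

/-- `∂ₜη(t,x₁,x₂)` -/
def etaT3 (η : ℝ → ℝ → ℝ → ℝ) (t x₁ x₂ : ℝ) : ℝ := deriv (fun s => η s x₁ x₂) t

/-- the trace `ψ(t,x) = ϕ(t,x,η(t,x))` -/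
def psi3 (η : ℝ → ℝ → ℝ → ℝ) (ϕ : ℝ → ℝ → ℝ → ℝ → ℝ) (t x₁ x₂ : ℝ) : ℝ :=
  ϕ t x₁ x₂ (η t x₁ x₂)

/-- `∂ₜψ(t,x₁,x₂)` -/
def psi3T (η : ℝ → ℝ → ℝ → ℝ) (ϕ : ℝ → ℝ → ℝ → ℝ → ℝ) (t x₁ x₂ : ℝ) : ℝ :=
  deriv (fun s => psi3 η ϕ s x₁ x₂) t

/-- `∂_{x₁}ψ(t,x₁,x₂)` -/
def psi3X1 (η : ℝ → ℝ → ℝ → ℝ) (ϕ : ℝ → ℝ → ℝ → ℝ → ℝ) (t x₁ x₂ : ℝ) : ℝ :=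
  deriv (fun s => psi3 η ϕ t s x₂) x₁

/-- `∂_{x₂}ψ(t,x₁,x₂)` -/
def psi3X2 (η : ℝ → ℝ → ℝ → ℝ) (ϕ : ℝ → ℝ → ℝ → ℝ → ℝ) (t x₁ x₂ : ℝ) : ℝ :=
  deriv (fun s => psi3 η ϕ t x₁ s) x₂

/-- `Θ(t,x) = -η ∂ₜψ - (g/2) η²` -/
def Theta3 (g : ℝ) (η : ℝ → ℝ → ℝ → ℝ) (ϕ : ℝ → ℝ → ℝ → ℝ → ℝ) (t x₁ x₂ : ℝ) : ℝ :=
  -(η t x₁ x₂) * psi3T η ϕ t x₁ x₂ - g / 2 * (η t x₁ x₂) ^ 2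

/-- the energy `𝓗(t)` -/
def energy3D (L₁ L₂ h g : ℝ) (η : ℝ → ℝ → ℝ → ℝ) (ϕ : ℝ → ℝ → ℝ → ℝ → ℝ) (t : ℝ) : ℝ :=
  g / 2 * (∫ x₁ in (0:ℝ)..L₁, ∫ x₂ in (0:ℝ)..L₂, (η t x₁ x₂) ^ 2)
    + 1 / 2 * ∫ x₁ in (0:ℝ)..L₁, ∫ x₂ in (0:ℝ)..L₂, ∫ y in (-h)..(η t x₁ x₂),
        gradSq3 ϕ t x₁ x₂ y

/-- the boundary observation `𝓑(T)` -/
def bigB (L₁ L₂ g T : ℝ) (η : ℝ → ℝ → ℝ → ℝ) (ϕ : ℝ → ℝ → ℝ → ℝ → ℝ) : ℝ :=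
  ∫ t in (0:ℝ)..T,
    (L₁ * (∫ x₂ in (0:ℝ)..L₂, Theta3 g η ϕ t L₁ x₂)
      + L₂ * ∫ x₁ in (0:ℝ)..L₁, Theta3 g η ϕ t x₁ L₂)

/-- the positive boundary term `P` -/
def bigP (L₁ L₂ h T : ℝ) (η : ℝ → ℝ → ℝ → ℝ) (ϕ : ℝ → ℝ → ℝ → ℝ → ℝ) : ℝ :=
  1 / 2 * ∫ t in (0:ℝ)..T,
    (L₁ * (∫ x₂ in (0:ℝ)..L₂, ∫ y in (-h)..(η t L₁ x₂), gradSq3 ϕ t L₁ x₂ y)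
      + L₂ * (∫ x₁ in (0:ℝ)..L₁, ∫ y in (-h)..(η t x₁ L₂), gradSq3 ϕ t x₁ L₂ y)
      + h * ∫ x₁ in (0:ℝ)..L₁, ∫ x₂ in (0:ℝ)..L₂, gradSq3 ϕ t x₁ x₂ (-h))

/-- A smooth solution of the three-dimensional water-wave system on `[0,T]`,
in the tank over `Q = [0,L₁] × [0,L₂]`. -/
structure IsWW3D (L₁ L₂ h g T : ℝ) (η : ℝ → ℝ → ℝ → ℝ)
    (ϕ : ℝ → ℝ → ℝ → ℝ → ℝ) : Prop where
  smooth_eta : ContDiff ℝ (⊤ : ℕ∞) (fun p : ℝ × ℝ × ℝ => η p.1 p.2.1 p.2.2)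
  smooth_phi : ContDiff ℝ (⊤ : ℕ∞) (fun p : ℝ × ℝ × ℝ × ℝ => ϕ p.1 p.2.1 p.2.2.1 p.2.2.2)
  eta_lower : ∀ t ∈ Icc (0:ℝ) T, ∀ x₁ ∈ Icc (0:ℝ) L₁, ∀ x₂ ∈ Icc (0:ℝ) L₂,
    -h / 2 ≤ η t x₁ x₂
  eta_mean : ∀ t ∈ Icc (0:ℝ) T,
    (∫ x₁ in (0:ℝ)..L₁, ∫ x₂ in (0:ℝ)..L₂, η t x₁ x₂) = 0
  laplace : ∀ t ∈ Icc (0:ℝ) T, ∀ x₁ ∈ Icc (0:ℝ) L₁, ∀ x₂ ∈ Icc (0:ℝ) L₂,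
    ∀ y ∈ Icc (-h) (η t x₁ x₂),
      deriv (fun s => phiX1 ϕ t s x₂ y) x₁ + deriv (fun s => phiX2 ϕ t x₁ s y) x₂
        + deriv (fun s => phiY3 ϕ t x₁ x₂ s) y = 0
  bc_x1 : ∀ t ∈ Icc (0:ℝ) T, ∀ x₁ ∈ ({0, L₁} : Set ℝ), ∀ x₂ ∈ Icc (0:ℝ) L₂,
    ∀ y ∈ Icc (-h) (η t x₁ x₂), phiX1 ϕ t x₁ x₂ y = 0
  bc_x2 : ∀ t ∈ Icc (0:ℝ) T, ∀ x₂ ∈ ({0, L₂} : Set ℝ), ∀ x₁ ∈ Icc (0:ℝ) L₁,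
    ∀ y ∈ Icc (-h) (η t x₁ x₂), phiX2 ϕ t x₁ x₂ y = 0
  bc_bottom : ∀ t ∈ Icc (0:ℝ) T, ∀ x₁ ∈ Icc (0:ℝ) L₁, ∀ x₂ ∈ Icc (0:ℝ) L₂,
    phiY3 ϕ t x₁ x₂ (-h) = 0
  kinematic : ∀ t ∈ Icc (0:ℝ) T, ∀ x₁ ∈ Icc (0:ℝ) L₁, ∀ x₂ ∈ Icc (0:ℝ) L₂,
    etaT3 η t x₁ x₂
      = phiY3 ϕ t x₁ x₂ (η t x₁ x₂)
        - (etaX1 η t x₁ x₂ * phiX1 ϕ t x₁ x₂ (η t x₁ x₂)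
            + etaX2 η t x₁ x₂ * phiX2 ϕ t x₁ x₂ (η t x₁ x₂))
  bernoulli : ∀ t ∈ Icc (0:ℝ) T, ∀ x₁ ∈ Icc (0:ℝ) L₁, ∀ x₂ ∈ Icc (0:ℝ) L₂,
    phiT3 ϕ t x₁ x₂ (η t x₁ x₂)
      + 1 / 2 * ((phiX1 ϕ t x₁ x₂ (η t x₁ x₂)) ^ 2
          + (phiX2 ϕ t x₁ x₂ (η t x₁ x₂)) ^ 2 + (phiY3 ϕ t x₁ x₂ (η t x₁ x₂)) ^ 2)
      + g * η t x₁ x₂ = 0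
  etaX1_bc : ∀ t ∈ Icc (0:ℝ) T, ∀ x₁ ∈ ({0, L₁} : Set ℝ), ∀ x₂ ∈ Icc (0:ℝ) L₂,
    etaX1 η t x₁ x₂ = 0
  etaX2_bc : ∀ t ∈ Icc (0:ℝ) T, ∀ x₂ ∈ ({0, L₂} : Set ℝ), ∀ x₁ ∈ Icc (0:ℝ) L₁,
    etaX2 η t x₁ x₂ = 0



theorem ww_swap (f : ℝ × ℝ → ℝ) (hf : Continuous f) (a b c d : ℝ) :
    ∫ x in a..b, ∫ y in c..d, f (x, y) = ∫ y in c..d, ∫ x in a..b, f (x, y) := by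
  apply intervalIntegral_intervalIntegral_swap (F := fun x y => f (x, y))
  have h : IntegrableOn f (uIcc a b ×ˢ uIcc c d) :=
    hf.continuousOn.integrableOn_compact (isCompact_uIcc.prod isCompact_uIcc)
  exact h.mono_set (Set.prod_mono uIoc_subset_uIcc uIoc_subset_uIcc)

theorem ww_leib_s8 (a a' : ℝ × ℝ → ℝ) (ha : Continuous a) (ha' : Continuous a')
    (hd : ∀ x y, HasDerivAt (fun s => a (s, y)) (a' (x, y)) x) (c d x : ℝ) :
    HasDerivAt (fun x => ∫ y in c..d, a (x, y)) (∫ y in c..d, a' (x, y)) x := by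
  have key : (fun x' => ∫ y in c..d, a (x', y)) =
      fun x' => (∫ s in x..x', ∫ y in c..d, a' (s, y)) + ∫ y in c..d, a (x, y) := by
    funext x'
    rw [ww_swap a' ha']
    have : ∀ y, ∫ s in x..x', a' (s, y) = a (x', y) - a (x, y) := by
      intro y
      apply intervalIntegral.integral_eq_sub_of_hasDerivAt (f := fun s => a (s, y))
      · intro s _; exact hd s y
      · exact (by fun_prop : Continuous fun s => a' (s, y)).intervalIntegrable _ _
    simp_rw [this]
    rw [intervalIntegral.integral_sub]
    · ring
    · exact (by fun_prop : Continuous fun y => a (x', y)).intervalIntegrable _ _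
    · exact (by fun_prop : Continuous fun y => a (x, y)).intervalIntegrable _ _
  rw [key]
  apply HasDerivAt.add_const
  have hc : Continuous fun s => ∫ y in c..d, a' (s, y) := by fun_prop
  exact hc.integral_hasStrictDerivAt x x |>.hasDerivAt

theorem ww_leibv (a a' : ℝ × ℝ → ℝ) (ha : Continuous a) (ha' : Continuous a')
    (hd : ∀ x y, HasDerivAt (fun s => a (s, y)) (a' (x, y)) x) (b : ℝ → ℝ) (c b' x : ℝ)
    (hb : HasDerivAt b b' x) :
    HasDerivAt (fun x => ∫ y in c..b x, a (x, y)) ((∫ y in c..b x, a' (x, y)) + a (x, b x) * b') x := by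
  have h := hasStrictFDerivAt_uncurry_coprod (𝕜 := ℝ) (u := (x, b x))
    (f := fun x z => ∫ y in c..z, a (x, y))
    (f₁ := fun x z => ContinuousLinearMap.toSpanSingleton ℝ (∫ y in c..z, a' (x, y)))
    (f₂ := fun x z => ContinuousLinearMap.toSpanSingleton ℝ (a (x, z)))
    (Filter.Eventually.of_forall fun v => ww_leib_s8 a a' ha ha' hd c v.2 v.1 |>.hasFDerivAt)
    (Filter.Eventually.of_forall fun v =>
      ((by fun_prop : Continuous fun y => a (v.1, y)).integral_hasStrictDerivAt c v.2).hasDerivAt.hasFDerivAt)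
    (by
      apply Continuous.continuousAt
      have : Continuous fun v : ℝ × ℝ => ∫ y in c..v.2, a' (v.1, y) := by fun_prop
      exact (ContinuousLinearMap.toSpanSingletonCLE (𝕜 := ℝ) (E := ℝ)).continuous.comp this)
    (by
      apply Continuous.continuousAt
      exact (ContinuousLinearMap.toSpanSingletonCLE (𝕜 := ℝ) (E := ℝ)).continuous.comp ha)
  have h2 : HasDerivAt (fun s => (s, b s)) ((1 : ℝ), b') x := (hasDerivAt_id x).prodMk hb
  have h3 := h.hasFDerivAt.comp_hasDerivAt x h2
  refine h3.congr_deriv ?_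
  simp [Function.HasUncurry.uncurry]
  ring

/-- double integral over the rectangle -/
noncomputable def wwI (L₁ L₂ : ℝ) (F : ℝ × ℝ → ℝ) : ℝ := ∫ x₁ in (0:ℝ)..L₁, ∫ x₂ in (0:ℝ)..L₂, F (x₁, x₂)

theorem wwI_add {L₁ L₂ : ℝ} {F G : ℝ × ℝ → ℝ} (hF : Continuous F) (hG : Continuous G) :
    wwI L₁ L₂ (fun p => F p + G p) = wwI L₁ L₂ F + wwI L₁ L₂ G := by
  unfold wwI
  rw [← intervalIntegral.integral_add]
  · congr 1; funext x
    rw [← intervalIntegral.integral_add]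
    · exact Continuous.intervalIntegrable (by fun_prop) _ _
    · exact Continuous.intervalIntegrable (by fun_prop) _ _
  · exact Continuous.intervalIntegrable (by fun_prop) _ _
  · exact Continuous.intervalIntegrable (by fun_prop) _ _

theorem wwI_smul {L₁ L₂ : ℝ} (c : ℝ) (F : ℝ × ℝ → ℝ) :
    wwI L₁ L₂ (fun p => c * F p) = c * wwI L₁ L₂ F := by
  unfold wwI
  simp [intervalIntegral.integral_const_mul]

theorem wwI_congr {L₁ L₂ : ℝ} (h1 : 0 ≤ L₁) (h2 : 0 ≤ L₂) {F G : ℝ × ℝ → ℝ}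
    (h : ∀ x₁ ∈ Icc 0 L₁, ∀ x₂ ∈ Icc 0 L₂, F (x₁, x₂) = G (x₁, x₂)) :
    wwI L₁ L₂ F = wwI L₁ L₂ G := by
  unfold wwI
  apply intervalIntegral.integral_congr
  intro x hx
  apply intervalIntegral.integral_congr
  intro y hy
  rw [uIcc_of_le h1] at hx
  rw [uIcc_of_le h2] at hy
  exact h x hx y hy

theorem wwI_dx {L₁ L₂ : ℝ} {A A' : ℝ × ℝ → ℝ} (hA : Continuous A) (hA' : Continuous A')
    (hd : ∀ x y, HasDerivAt (fun s => A (s, y)) (A' (x, y)) x) :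
    wwI L₁ L₂ A' = (∫ y in (0:ℝ)..L₂, A (L₁, y)) - ∫ y in (0:ℝ)..L₂, A (0, y) := by
  unfold wwI
  apply intervalIntegral.integral_eq_sub_of_hasDerivAt (f := fun s => ∫ y in (0:ℝ)..L₂, A (s, y))
  · intro x _; exact ww_leib_s8 A A' hA hA' hd _ _ _
  · exact Continuous.intervalIntegrable (by fun_prop) _ _

theorem wwI_dy {L₁ L₂ : ℝ} {A A' : ℝ × ℝ → ℝ} (hA : Continuous A) (hA' : Continuous A')
    (hd : ∀ x y, HasDerivAt (fun s => A (x, s)) (A' (x, y)) y) :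
    wwI L₁ L₂ A' = (∫ x in (0:ℝ)..L₁, A (x, L₂)) - ∫ x in (0:ℝ)..L₁, A (x, 0) := by
  unfold wwI
  rw [← intervalIntegral.integral_sub]
  · congr 1; funext x
    apply intervalIntegral.integral_eq_sub_of_hasDerivAt (f := fun s => A (x, s))
    · intro y _; exact hd _ _
    · exact Continuous.intervalIntegrable (by fun_prop) _ _
  · exact Continuous.intervalIntegrable (by fun_prop) _ _
  · exact Continuous.intervalIntegrable (by fun_prop) _ _

/-- divergence theorem in the fluid domain -/
theorem ww_div_s8 {L₁ L₂ c : ℝ} {e e1 e2 : ℝ × ℝ → ℝ} {A A1 B B2 C C3 : ℝ × ℝ × ℝ → ℝ}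
    (he : Continuous e) (he1 : Continuous e1) (he2 : Continuous e2)
    (de1 : ∀ x y, HasDerivAt (fun s => e (s, y)) (e1 (x, y)) x)
    (de2 : ∀ x y, HasDerivAt (fun s => e (x, s)) (e2 (x, y)) y)
    (hA : Continuous A) (hA1 : Continuous A1) (hB : Continuous B) (hB2 : Continuous B2)
    (hC : Continuous C) (hC3 : Continuous C3)
    (dA : ∀ x y z, HasDerivAt (fun s => A (s, y, z)) (A1 (x, y, z)) x)
    (dB : ∀ x y z, HasDerivAt (fun s => B (x, s, z)) (B2 (x, y, z)) y)
    (dC : ∀ x y z, HasDerivAt (fun s => C (x, y, s)) (C3 (x, y, z)) z) :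
    wwI L₁ L₂ (fun p => ∫ z in c..e p, (A1 (p.1, p.2, z) + B2 (p.1, p.2, z) + C3 (p.1, p.2, z)))
      = wwI L₁ L₂ (fun p => C (p.1, p.2, e p) - C (p.1, p.2, c) - A (p.1, p.2, e p) * e1 p
          - B (p.1, p.2, e p) * e2 p)
        + ((∫ y in (0:ℝ)..L₂, ∫ z in c..e (L₁, y), A (L₁, y, z))
            - ∫ y in (0:ℝ)..L₂, ∫ z in c..e (0, y), A (0, y, z))
        + ((∫ x in (0:ℝ)..L₁, ∫ z in c..e (x, L₂), B (x, L₂, z))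
            - ∫ x in (0:ℝ)..L₁, ∫ z in c..e (x, 0), B (x, 0, z)) := by
  have hx := wwI_dx (L₁ := L₁) (L₂ := L₂) (A := fun p => ∫ z in c..e p, A (p.1, p.2, z))
    (A' := fun p => (∫ z in c..e p, A1 (p.1, p.2, z)) + A (p.1, p.2, e p) * e1 p)
    (by fun_prop) (by fun_prop) (fun x y => by
      exact ww_leibv (fun q => A (q.1, y, q.2)) (fun q => A1 (q.1, y, q.2)) (by fun_prop)
        (by fun_prop) (fun x z => dA x y z) (fun s => e (s, y)) c (e1 (x, y)) x (de1 x y))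
  have hy := wwI_dy (L₁ := L₁) (L₂ := L₂) (A := fun p => ∫ z in c..e p, B (p.1, p.2, z))
    (A' := fun p => (∫ z in c..e p, B2 (p.1, p.2, z)) + B (p.1, p.2, e p) * e2 p)
    (by fun_prop) (by fun_prop) (fun x y => by
      exact ww_leibv (fun q => B (x, q.1, q.2)) (fun q => B2 (x, q.1, q.2)) (by fun_prop)
        (by fun_prop) (fun y z => dB x y z) (fun s => e (x, s)) c (e2 (x, y)) y (de2 x y))
  rw [← hx, ← hy, ← wwI_add (by fun_prop) (by fun_prop), ← wwI_add (by fun_prop) (by fun_prop)]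
  congr 1
  funext p
  have hz : ∫ z in c..e p, C3 (p.1, p.2, z) = C (p.1, p.2, e p) - C (p.1, p.2, c) := by
    apply intervalIntegral.integral_eq_sub_of_hasDerivAt (f := fun s => C (p.1, p.2, s))
    · intro y _; exact dC _ _ _
    · exact Continuous.intervalIntegrable (by fun_prop) _ _
  rw [intervalIntegral.integral_add, intervalIntegral.integral_add, hz]
  · ring
  all_goals exact Continuous.intervalIntegrable (by fun_prop) _ _


structure WWDom (L₁ L₂ c : ℝ) (e e1 e2 : ℝ × ℝ → ℝ) : Prop where
  h1 : 0 ≤ L₁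
  h2 : 0 ≤ L₂
  he : Continuous e
  he1 : Continuous e1
  he2 : Continuous e2
  de1 : ∀ x y, HasDerivAt (fun s => e (s, y)) (e1 (x, y)) x
  de2 : ∀ x y, HasDerivAt (fun s => e (x, s)) (e2 (x, y)) y
  hce : ∀ x ∈ Icc 0 L₁, ∀ y ∈ Icc 0 L₂, c ≤ e (x, y)

structure WWJet (f f1 f2 f3 f11 f12 f13 f22 f23 f33 : ℝ × ℝ × ℝ → ℝ) : Prop where
  c0 : Continuous f
  c1 : Continuous f1
  c2 : Continuous f2
  c3 : Continuous f3
  c11 : Continuous f11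
  c12 : Continuous f12
  c13 : Continuous f13
  c22 : Continuous f22
  c23 : Continuous f23
  c33 : Continuous f33
  d1 : ∀ x y z, HasDerivAt (fun s => f (s, y, z)) (f1 (x, y, z)) x
  d2 : ∀ x y z, HasDerivAt (fun s => f (x, s, z)) (f2 (x, y, z)) y
  d3 : ∀ x y z, HasDerivAt (fun s => f (x, y, s)) (f3 (x, y, z)) z
  d11 : ∀ x y z, HasDerivAt (fun s => f1 (s, y, z)) (f11 (x, y, z)) x
  d12 : ∀ x y z, HasDerivAt (fun s => f1 (x, s, z)) (f12 (x, y, z)) y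
  d13 : ∀ x y z, HasDerivAt (fun s => f1 (x, y, s)) (f13 (x, y, z)) z
  d21 : ∀ x y z, HasDerivAt (fun s => f2 (s, y, z)) (f12 (x, y, z)) x
  d22 : ∀ x y z, HasDerivAt (fun s => f2 (x, s, z)) (f22 (x, y, z)) y
  d23 : ∀ x y z, HasDerivAt (fun s => f2 (x, y, s)) (f23 (x, y, z)) z
  d31 : ∀ x y z, HasDerivAt (fun s => f3 (s, y, z)) (f13 (x, y, z)) x
  d32 : ∀ x y z, HasDerivAt (fun s => f3 (x, s, z)) (f23 (x, y, z)) y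
  d33 : ∀ x y z, HasDerivAt (fun s => f3 (x, y, s)) (f33 (x, y, z)) z

structure WWFlu (L₁ L₂ c : ℝ) (e : ℝ × ℝ → ℝ) (f1 f2 f3 f11 f22 f33 : ℝ × ℝ × ℝ → ℝ) : Prop where
  lap : ∀ x ∈ Icc 0 L₁, ∀ y ∈ Icc 0 L₂, ∀ z ∈ Icc c (e (x, y)),
    f11 (x, y, z) + f22 (x, y, z) + f33 (x, y, z) = 0
  w10 : ∀ y ∈ Icc 0 L₂, ∀ z ∈ Icc c (e (0, y)), f1 (0, y, z) = 0
  w1L : ∀ y ∈ Icc 0 L₂, ∀ z ∈ Icc c (e (L₁, y)), f1 (L₁, y, z) = 0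
  w20 : ∀ x ∈ Icc 0 L₁, ∀ z ∈ Icc c (e (x, 0)), f2 (x, 0, z) = 0
  w2L : ∀ x ∈ Icc 0 L₁, ∀ z ∈ Icc c (e (x, L₂)), f2 (x, L₂, z) = 0
  bot : ∀ x ∈ Icc 0 L₁, ∀ y ∈ Icc 0 L₂, f3 (x, y, c) = 0

theorem ww_wall {a b c : ℝ} (hab : a ≤ b) {e : ℝ → ℝ} (hce : ∀ x ∈ Icc a b, c ≤ e x)
    {F G : ℝ → ℝ → ℝ} (h : ∀ x ∈ Icc a b, ∀ z ∈ Icc c (e x), F x z = G x z) :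
    ∫ x in a..b, ∫ z in c..e x, F x z = ∫ x in a..b, ∫ z in c..e x, G x z := by
  apply intervalIntegral.integral_congr
  intro x hx
  rw [uIcc_of_le hab] at hx
  apply intervalIntegral.integral_congr
  intro z hz
  rw [uIcc_of_le (hce x hx)] at hz
  exact h x hx z hz

theorem ww_wall0 {a b c : ℝ} (hab : a ≤ b) {e : ℝ → ℝ} (hce : ∀ x ∈ Icc a b, c ≤ e x)
    {F : ℝ → ℝ → ℝ} (h : ∀ x ∈ Icc a b, ∀ z ∈ Icc c (e x), F x z = 0) :
    ∫ x in a..b, ∫ z in c..e x, F x z = 0 := by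
  rw [ww_wall hab hce (G := fun _ _ => 0) h]
  simp

theorem ww_col {L₁ L₂ c : ℝ} {e e1 e2 : ℝ × ℝ → ℝ} (D : WWDom L₁ L₂ c e e1 e2)
    {F G : ℝ × ℝ × ℝ → ℝ}
    (h : ∀ x ∈ Icc 0 L₁, ∀ y ∈ Icc 0 L₂, ∀ z ∈ Icc c (e (x, y)), F (x, y, z) = G (x, y, z)) :
    wwI L₁ L₂ (fun p => ∫ z in c..e p, F (p.1, p.2, z))
      = wwI L₁ L₂ (fun p => ∫ z in c..e p, G (p.1, p.2, z)) := by
  apply wwI_congr D.h1 D.h2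
  intro x hx y hy
  apply intervalIntegral.integral_congr
  intro z hz
  rw [uIcc_of_le (D.hce x hx y hy)] at hz
  exact h x hx y hy z hz

theorem ww_green {L₁ L₂ c : ℝ} {e e1 e2 : ℝ × ℝ → ℝ}
    {f f1 f2 f3 f11 f12 f13 f22 f23 f33 w w1 w2 w3 : ℝ × ℝ × ℝ → ℝ}
    (D : WWDom L₁ L₂ c e e1 e2) (J : WWJet f f1 f2 f3 f11 f12 f13 f22 f23 f33)
    (K : WWFlu L₁ L₂ c e f1 f2 f3 f11 f22 f33)
    (cw : Continuous w) (cw1 : Continuous w1) (cw2 : Continuous w2) (cw3 : Continuous w3)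
    (dw1 : ∀ x y z, HasDerivAt (fun s => w (s, y, z)) (w1 (x, y, z)) x)
    (dw2 : ∀ x y z, HasDerivAt (fun s => w (x, s, z)) (w2 (x, y, z)) y)
    (dw3 : ∀ x y z, HasDerivAt (fun s => w (x, y, s)) (w3 (x, y, z)) z) :
    wwI L₁ L₂ (fun p => ∫ z in c..e p, (w1 (p.1, p.2, z) * f1 (p.1, p.2, z)
        + w2 (p.1, p.2, z) * f2 (p.1, p.2, z) + w3 (p.1, p.2, z) * f3 (p.1, p.2, z)))
      = wwI L₁ L₂ (fun p => w (p.1, p.2, e p) * (f3 (p.1, p.2, e p)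
          - (e1 p * f1 (p.1, p.2, e p) + e2 p * f2 (p.1, p.2, e p)))) := by
  obtain ⟨h1, h2, he, he1, he2, de1, de2, hce⟩ := id D
  obtain ⟨c0, c1, c2, c3, c11, c12, c13, c22, c23, c33, d1, d2, d3, d11, d12, d13, d21, d22, d23, d31, d32, d33⟩ := J
  have h0L1 : (0:ℝ) ∈ Icc 0 L₁ := ⟨le_rfl, h1⟩
  have hLL1 : L₁ ∈ Icc 0 L₁ := ⟨h1, le_rfl⟩
  have h0L2 : (0:ℝ) ∈ Icc 0 L₂ := ⟨le_rfl, h2⟩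
  have hLL2 : L₂ ∈ Icc 0 L₂ := ⟨h2, le_rfl⟩
  have key := ww_div_s8 (L₁ := L₁) (L₂ := L₂) (c := c)
    (A := fun q => w q * f1 q) (A1 := fun q => w1 q * f1 q + w q * f11 q)
    (B := fun q => w q * f2 q) (B2 := fun q => w2 q * f2 q + w q * f22 q)
    (C := fun q => w q * f3 q) (C3 := fun q => w3 q * f3 q + w q * f33 q)
    he he1 he2 de1 de2 (by fun_prop) (by fun_prop) (by fun_prop) (by fun_prop) (by fun_prop)
    (by fun_prop) (fun x y z => (dw1 x y z).mul (d11 x y z))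
    (fun x y z => (dw2 x y z).mul (d22 x y z)) (fun x y z => (dw3 x y z).mul (d33 x y z))
  rw [ww_wall0 h2 (hce L₁ hLL1) (fun y hy z hz => by simp [K.w1L y hy z hz]),
    ww_wall0 h2 (hce 0 h0L1) (fun y hy z hz => by simp [K.w10 y hy z hz]),
    ww_wall0 h1 (fun x hx => hce x hx L₂ hLL2) (fun y hy z hz => by simp [K.w2L y hy z hz]),
    ww_wall0 h1 (fun x hx => hce x hx 0 h0L2) (fun y hy z hz => by simp [K.w20 y hy z hz])] at key
  have e1 := ww_col D (F := fun q => w1 q * f1 q + w2 q * f2 q + w3 q * f3 q)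
    (G := fun q => w1 q * f1 q + w q * f11 q + (w2 q * f2 q + w q * f22 q) + (w3 q * f3 q + w q * f33 q))
    (fun x hx y hy z hz => by linear_combination -(w (x, y, z)) * K.lap x hx y hy z hz)
  refine (e1.trans key).trans ?_
  simp only [sub_self, add_zero]
  apply wwI_congr h1 h2
  intro x hx y hy
  simp only [K.bot x hx y hy]
  ring

/-- Pohozaev identity -/
theorem ww_poho {L₁ L₂ c : ℝ} {e e1 e2 : ℝ × ℝ → ℝ}
    {f f1 f2 f3 f11 f12 f13 f22 f23 f33 : ℝ × ℝ × ℝ → ℝ}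
    (D : WWDom L₁ L₂ c e e1 e2) (J : WWJet f f1 f2 f3 f11 f12 f13 f22 f23 f33)
    (K : WWFlu L₁ L₂ c e f1 f2 f3 f11 f22 f33) :
    wwI L₁ L₂ (fun p => ∫ z in c..e p, (-1 / 2) * (f1 (p.1, p.2, z) ^ 2
        + f2 (p.1, p.2, z) ^ 2 + f3 (p.1, p.2, z) ^ 2))
      = wwI L₁ L₂ (fun p => (p.1 * f1 (p.1, p.2, e p) + p.2 * f2 (p.1, p.2, e p)
            + e p * f3 (p.1, p.2, e p)) * (f3 (p.1, p.2, e p)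
          - (e1 p * f1 (p.1, p.2, e p) + e2 p * f2 (p.1, p.2, e p)))
          - 1 / 2 * (f1 (p.1, p.2, e p) ^ 2
        + f2 (p.1, p.2, e p) ^ 2 + f3 (p.1, p.2, e p) ^ 2) * (e p - p.1 * e1 p - p.2 * e2 p)
        + c / 2 * (f1 (p.1, p.2, c) ^ 2 + f2 (p.1, p.2, c) ^ 2 + f3 (p.1, p.2, c) ^ 2))
        - 1 / 2 * (L₁ * ∫ y in (0:ℝ)..L₂, ∫ z in c..e (L₁, y), (f1 (L₁, y, z) ^ 2
            + f2 (L₁, y, z) ^ 2 + f3 (L₁, y, z) ^ 2))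
        - 1 / 2 * (L₂ * ∫ x in (0:ℝ)..L₁, ∫ z in c..e (x, L₂), (f1 (x, L₂, z) ^ 2
            + f2 (x, L₂, z) ^ 2 + f3 (x, L₂, z) ^ 2)) := by
  obtain ⟨h1, h2, he, he1, he2, de1, de2, hce⟩ := id D
  obtain ⟨c0, c1, c2, c3, c11, c12, c13, c22, c23, c33, d1, d2, d3, d11, d12, d13, d21, d22, d23, d31, d32, d33⟩ := J
  have h0L1 : (0:ℝ) ∈ Icc 0 L₁ := ⟨le_rfl, h1⟩
  have hLL1 : L₁ ∈ Icc 0 L₁ := ⟨h1, le_rfl⟩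
  have h0L2 : (0:ℝ) ∈ Icc 0 L₂ := ⟨le_rfl, h2⟩
  have hLL2 : L₂ ∈ Icc 0 L₂ := ⟨h2, le_rfl⟩
  have key := ww_div_s8 (L₁ := L₁) (L₂ := L₂) (c := c)
    (A := fun q => (q.1 * f1 q + q.2.1 * f2 q + q.2.2 * f3 q) * f1 q - 1 / 2 * (f1 q ^ 2 + f2 q ^ 2 + f3 q ^ 2) * q.1)
    (A1 := fun q => (f1 q + q.1 * f11 q + q.2.1 * f12 q + q.2.2 * f13 q) * f1 q
      + (q.1 * f1 q + q.2.1 * f2 q + q.2.2 * f3 q) * f11 q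
      - (f1 q * f11 q + f2 q * f12 q + f3 q * f13 q) * q.1 - 1 / 2 * (f1 q ^ 2 + f2 q ^ 2 + f3 q ^ 2))
    (B := fun q => (q.1 * f1 q + q.2.1 * f2 q + q.2.2 * f3 q) * f2 q - 1 / 2 * (f1 q ^ 2 + f2 q ^ 2 + f3 q ^ 2) * q.2.1)
    (B2 := fun q => (f2 q + q.1 * f12 q + q.2.1 * f22 q + q.2.2 * f23 q) * f2 q
      + (q.1 * f1 q + q.2.1 * f2 q + q.2.2 * f3 q) * f22 q
      - (f1 q * f12 q + f2 q * f22 q + f3 q * f23 q) * q.2.1 - 1 / 2 * (f1 q ^ 2 + f2 q ^ 2 + f3 q ^ 2))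
    (C := fun q => (q.1 * f1 q + q.2.1 * f2 q + q.2.2 * f3 q) * f3 q - 1 / 2 * (f1 q ^ 2 + f2 q ^ 2 + f3 q ^ 2) * q.2.2)
    (C3 := fun q => (f3 q + q.1 * f13 q + q.2.1 * f23 q + q.2.2 * f33 q) * f3 q
      + (q.1 * f1 q + q.2.1 * f2 q + q.2.2 * f3 q) * f33 q
      - (f1 q * f13 q + f2 q * f23 q + f3 q * f33 q) * q.2.2 - 1 / 2 * (f1 q ^ 2 + f2 q ^ 2 + f3 q ^ 2))
    he he1 he2 de1 de2 (by fun_prop) (by fun_prop) (by fun_prop) (by fun_prop) (by fun_prop)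
    (by fun_prop)
    (fun x y z => by
      refine HasDerivAt.congr_deriv ((((((hasDerivAt_id' x).mul (d11 x y z)).add ((d21 x y z).const_mul y)).add
        ((d31 x y z).const_mul z)).mul (d11 x y z)).sub
        ((((((d11 x y z).pow 2).add ((d21 x y z).pow 2)).add ((d31 x y z).pow 2)).const_mul (1/2)).mul (hasDerivAt_id' x))) ?_
      simp; ring)
    (fun x y z => by
      refine HasDerivAt.congr_deriv ((((((d12 x y z).const_mul x).add ((hasDerivAt_id' y).mul (d22 x y z))).add
        ((d32 x y z).const_mul z)).mul (d22 x y z)).sub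
        ((((((d12 x y z).pow 2).add ((d22 x y z).pow 2)).add ((d32 x y z).pow 2)).const_mul (1/2)).mul (hasDerivAt_id' y))) ?_
      simp; ring)
    (fun x y z => by
      refine HasDerivAt.congr_deriv ((((((d13 x y z).const_mul x).add ((d23 x y z).const_mul y)).add
        ((hasDerivAt_id' z).mul (d33 x y z))).mul (d33 x y z)).sub
        ((((((d13 x y z).pow 2).add ((d23 x y z).pow 2)).add ((d33 x y z).pow 2)).const_mul (1/2)).mul (hasDerivAt_id' z))) ?_
      simp; ring)
  rw [ww_wall (G := fun y z => (-1 / 2 * L₁) * (f1 (L₁, y, z) ^ 2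
            + f2 (L₁, y, z) ^ 2 + f3 (L₁, y, z) ^ 2)) h2 (hce L₁ hLL1)
            (fun y hy z hz => by simp only [K.w1L y hy z hz]; ring),
    ww_wall0 h2 (hce 0 h0L1) (fun y hy z hz => by simp [K.w10 y hy z hz]),
    ww_wall (G := fun x z => (-1 / 2 * L₂) * (f1 (x, L₂, z) ^ 2
            + f2 (x, L₂, z) ^ 2 + f3 (x, L₂, z) ^ 2)) h1 (fun x hx => hce x hx L₂ hLL2)
            (fun y hy z hz => by simp only [K.w2L y hy z hz]; ring),
    ww_wall0 h1 (fun x hx => hce x hx 0 h0L2) (fun y hy z hz => by simp [K.w20 y hy z hz])] at key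
  simp only [intervalIntegral.integral_const_mul (-1 / 2 * L₁),
    intervalIntegral.integral_const_mul (-1 / 2 * L₂)] at key
  have e1 := ww_col D (F := fun q => (-1 / 2) * (f1 q ^ 2 + f2 q ^ 2 + f3 q ^ 2))
    (G := fun q => ((f1 q + q.1 * f11 q + q.2.1 * f12 q + q.2.2 * f13 q) * f1 q
      + (q.1 * f1 q + q.2.1 * f2 q + q.2.2 * f3 q) * f11 q
      - (f1 q * f11 q + f2 q * f12 q + f3 q * f13 q) * q.1 - 1 / 2 * (f1 q ^ 2 + f2 q ^ 2 + f3 q ^ 2))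
      + ((f2 q + q.1 * f12 q + q.2.1 * f22 q + q.2.2 * f23 q) * f2 q
      + (q.1 * f1 q + q.2.1 * f2 q + q.2.2 * f3 q) * f22 q
      - (f1 q * f12 q + f2 q * f22 q + f3 q * f23 q) * q.2.1 - 1 / 2 * (f1 q ^ 2 + f2 q ^ 2 + f3 q ^ 2))
      + ((f3 q + q.1 * f13 q + q.2.1 * f23 q + q.2.2 * f33 q) * f3 q
      + (q.1 * f1 q + q.2.1 * f2 q + q.2.2 * f3 q) * f33 q
      - (f1 q * f13 q + f2 q * f23 q + f3 q * f33 q) * q.2.2 - 1 / 2 * (f1 q ^ 2 + f2 q ^ 2 + f3 q ^ 2)))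
    (fun x hx y hy z hz => by
      linear_combination -(x * f1 (x, y, z) + y * f2 (x, y, z) + z * f3 (x, y, z)) * K.lap x hx y hy z hz)
  refine (e1.trans key).trans ?_
  have e3 : ∀ {a b a' b' : ℝ}, a = b → a + (-1 / 2 * L₁ * a' - 0) + (-1 / 2 * L₂ * b' - 0)
    = b - 1 / 2 * (L₁ * a') - 1 / 2 * (L₂ * b') := by intro a b a' b' h; rw [h]; ring
  apply e3
  apply wwI_congr h1 h2
  intro x hx y hy
  simp only [K.bot x hx y hy]
  ring

theorem ww_kin {L₁ L₂ c : ℝ} {e e1 e2 : ℝ × ℝ → ℝ}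
    {f f1 f2 f3 f11 f12 f13 f22 f23 f33 : ℝ × ℝ × ℝ → ℝ}
    (D : WWDom L₁ L₂ c e e1 e2) (J : WWJet f f1 f2 f3 f11 f12 f13 f22 f23 f33)
    (K : WWFlu L₁ L₂ c e f1 f2 f3 f11 f22 f33) :
    wwI L₁ L₂ (fun p => ∫ z in c..e p, f3 (p.1, p.2, z) * (e1 p * f1 (p.1, p.2, z)
        + e2 p * f2 (p.1, p.2, z)))
      = wwI L₁ L₂ (fun p => - (e p * (1 / 2 * (f1 (p.1, p.2, e p) ^ 2 + f2 (p.1, p.2, e p) ^ 2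
            - f3 (p.1, p.2, e p) ^ 2)
            + f3 (p.1, p.2, e p) * (e1 p * f1 (p.1, p.2, e p) + e2 p * f2 (p.1, p.2, e p))))
          + 1 / 2 * (e p * (f1 (p.1, p.2, c) ^ 2 + f2 (p.1, p.2, c) ^ 2))) := by
  obtain ⟨h1, h2, he, he1, he2, de1, de2, hce⟩ := id D
  obtain ⟨c0, c1, c2, c3, c11, c12, c13, c22, c23, c33, d1, d2, d3, d11, d12, d13, d21, d22, d23, d31, d32, d33⟩ := J
  have h0L1 : (0:ℝ) ∈ Icc 0 L₁ := ⟨le_rfl, h1⟩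
  have hLL1 : L₁ ∈ Icc 0 L₁ := ⟨h1, le_rfl⟩
  have h0L2 : (0:ℝ) ∈ Icc 0 L₂ := ⟨le_rfl, h2⟩
  have hLL2 : L₂ ∈ Icc 0 L₂ := ⟨h2, le_rfl⟩
  have key := ww_div_s8 (L₁ := L₁) (L₂ := L₂) (c := c)
    (A := fun q => e (q.1, q.2.1) * (f3 q * f1 q))
    (A1 := fun q => e1 (q.1, q.2.1) * (f3 q * f1 q) + e (q.1, q.2.1) * (f13 q * f1 q + f3 q * f11 q))
    (B := fun q => e (q.1, q.2.1) * (f3 q * f2 q))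
    (B2 := fun q => e2 (q.1, q.2.1) * (f3 q * f2 q) + e (q.1, q.2.1) * (f23 q * f2 q + f3 q * f22 q))
    (C := fun q => e (q.1, q.2.1) * (-1 / 2 * (f1 q ^ 2 + f2 q ^ 2 - f3 q ^ 2)))
    (C3 := fun q => e (q.1, q.2.1) * (-(f1 q * f13 q + f2 q * f23 q - f3 q * f33 q)))
    he he1 he2 de1 de2 (by fun_prop) (by fun_prop) (by fun_prop) (by fun_prop) (by fun_prop)
    (by fun_prop)
    (fun x y z => (de1 x y).mul ((d31 x y z).mul (d11 x y z)))
    (fun x y z => (de2 x y).mul ((d32 x y z).mul (d22 x y z)))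
    (fun x y z => by
      refine HasDerivAt.congr_deriv ((((((d13 x y z).pow 2).add ((d23 x y z).pow 2)).sub
        ((d33 x y z).pow 2)).const_mul (-1/2)).const_mul (e (x, y))) ?_
      simp; left; ring)
  rw [ww_wall0 h2 (hce L₁ hLL1) (fun y hy z hz => by simp [K.w1L y hy z hz]),
    ww_wall0 h2 (hce 0 h0L1) (fun y hy z hz => by simp [K.w10 y hy z hz]),
    ww_wall0 h1 (fun x hx => hce x hx L₂ hLL2) (fun y hy z hz => by simp [K.w2L y hy z hz]),
    ww_wall0 h1 (fun x hx => hce x hx 0 h0L2) (fun y hy z hz => by simp [K.w20 y hy z hz])] at key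
  have e1 := ww_col D (F := fun q => f3 q * (e1 (q.1, q.2.1) * f1 q + e2 (q.1, q.2.1) * f2 q))
    (G := fun q => e1 (q.1, q.2.1) * (f3 q * f1 q) + e (q.1, q.2.1) * (f13 q * f1 q + f3 q * f11 q)
      + (e2 (q.1, q.2.1) * (f3 q * f2 q) + e (q.1, q.2.1) * (f23 q * f2 q + f3 q * f22 q))
      + e (q.1, q.2.1) * (-(f1 q * f13 q + f2 q * f23 q - f3 q * f33 q)))
    (fun x hx y hy z hz => by
      linear_combination -(e (x, y) * f3 (x, y, z)) * K.lap x hx y hy z hz)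
  refine (e1.trans key).trans ?_
  simp only [sub_self, add_zero]
  apply wwI_congr h1 h2
  intro x hx y hy
  simp only [K.bot x hx y hy]
  ring


theorem wwI_lin10 {L₁ L₂ : ℝ} (h1 : 0 ≤ L₁) (h2 : 0 ≤ L₂)
    {F1 F2 F3 F4 F5 F6 F7 F8 F9 F10 : ℝ × ℝ → ℝ}
    (k1 : Continuous F1) (k2 : Continuous F2) (k3 : Continuous F3) (k4 : Continuous F4)
    (k5 : Continuous F5) (k6 : Continuous F6) (k7 : Continuous F7) (k8 : Continuous F8)
    (k9 : Continuous F9) (k10 : Continuous F10) (c1 c2 c3 c4 c5 c6 c7 c8 c9 c10 : ℝ)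
    (hz : ∀ x ∈ Icc 0 L₁, ∀ y ∈ Icc 0 L₂, c1 * F1 (x, y) + c2 * F2 (x, y) + c3 * F3 (x, y)
      + c4 * F4 (x, y) + c5 * F5 (x, y) + c6 * F6 (x, y) + c7 * F7 (x, y) + c8 * F8 (x, y)
      + c9 * F9 (x, y) + c10 * F10 (x, y) = 0) :
    c1 * wwI L₁ L₂ F1 + c2 * wwI L₁ L₂ F2 + c3 * wwI L₁ L₂ F3 + c4 * wwI L₁ L₂ F4
      + c5 * wwI L₁ L₂ F5 + c6 * wwI L₁ L₂ F6 + c7 * wwI L₁ L₂ F7 + c8 * wwI L₁ L₂ F8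
      + c9 * wwI L₁ L₂ F9 + c10 * wwI L₁ L₂ F10 = 0 := by
  rw [← wwI_smul, ← wwI_smul, ← wwI_smul, ← wwI_smul, ← wwI_smul, ← wwI_smul, ← wwI_smul,
    ← wwI_smul, ← wwI_smul, ← wwI_smul]
  rw [← wwI_add (by fun_prop) (by fun_prop), ← wwI_add (by fun_prop) (by fun_prop),
    ← wwI_add (by fun_prop) (by fun_prop), ← wwI_add (by fun_prop) (by fun_prop),
    ← wwI_add (by fun_prop) (by fun_prop), ← wwI_add (by fun_prop) (by fun_prop),
    ← wwI_add (by fun_prop) (by fun_prop), ← wwI_add (by fun_prop) (by fun_prop),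
    ← wwI_add (by fun_prop) (by fun_prop)]
  rw [wwI_congr h1 h2 (G := fun _ => 0) hz]
  simp [wwI]

theorem ww_slice {L₁ L₂ c g : ℝ} {e e1 e2 : ℝ × ℝ → ℝ}
    {f f1 f2 f3 f11 f12 f13 f22 f23 f33 ft : ℝ × ℝ × ℝ → ℝ}
    (D : WWDom L₁ L₂ c e e1 e2) (J : WWJet f f1 f2 f3 f11 f12 f13 f22 f23 f33)
    (K : WWFlu L₁ L₂ c e f1 f2 f3 f11 f22 f33)
    {et s s1 s2 st st1 st2 : ℝ × ℝ → ℝ}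
    (cet : Continuous et) (cs : Continuous s) (cs1 : Continuous s1) (cs2 : Continuous s2)
    (cst : Continuous st) (cst1 : Continuous st1) (cst2 : Continuous st2)
    (hs : ∀ p, s p = f (p.1, p.2, e p))
    (hs1 : ∀ p, s1 p = f1 (p.1, p.2, e p) + f3 (p.1, p.2, e p) * e1 p)
    (hs2 : ∀ p, s2 p = f2 (p.1, p.2, e p) + f3 (p.1, p.2, e p) * e2 p)
    (hst : ∀ p, st p = ft (p.1, p.2, e p) + f3 (p.1, p.2, e p) * et p)
    (dst1 : ∀ x y, HasDerivAt (fun s => st (s, y)) (st1 (x, y)) x)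
    (dst2 : ∀ x y, HasDerivAt (fun s => st (x, s)) (st2 (x, y)) y)
    (kin : ∀ x ∈ Icc 0 L₁, ∀ y ∈ Icc 0 L₂, et (x, y) = f3 (x, y, e (x, y))
      - (e1 (x, y) * f1 (x, y, e (x, y)) + e2 (x, y) * f2 (x, y, e (x, y))))
    (bern : ∀ x ∈ Icc 0 L₁, ∀ y ∈ Icc 0 L₂, ft (x, y, e (x, y)) + 1 / 2 *
      (f1 (x, y, e (x, y)) ^ 2 + f2 (x, y, e (x, y)) ^ 2 + f3 (x, y, e (x, y)) ^ 2)
      + g * e (x, y) = 0) :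
    L₁ * (∫ y in (0:ℝ)..L₂, (-(e (L₁, y)) * st (L₁, y) - g / 2 * e (L₁, y) ^ 2))
      + L₂ * (∫ x in (0:ℝ)..L₁, (-(e (x, L₂)) * st (x, L₂) - g / 2 * e (x, L₂) ^ 2))
    = - wwI L₁ L₂ (fun p => et p * (p.1 * s1 p + p.2 * s2 p) + e p * (p.1 * st1 p + p.2 * st2 p))
      - 3 / 4 * wwI L₁ L₂ (fun p => et p * s p + e p * st p)
      + 1 / 2 * (g / 2 * wwI L₁ L₂ (fun p => e p ^ 2)
        + 1 / 2 * wwI L₁ L₂ (fun p => ∫ z in c..e p, (f1 (p.1, p.2, z) ^ 2 + f2 (p.1, p.2, z) ^ 2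
          + f3 (p.1, p.2, z) ^ 2)))
      + 1 / 2 * (L₁ * (∫ y in (0:ℝ)..L₂, ∫ z in c..e (L₁, y), (f1 (L₁, y, z) ^ 2
            + f2 (L₁, y, z) ^ 2 + f3 (L₁, y, z) ^ 2))
          + L₂ * (∫ x in (0:ℝ)..L₁, ∫ z in c..e (x, L₂), (f1 (x, L₂, z) ^ 2
            + f2 (x, L₂, z) ^ 2 + f3 (x, L₂, z) ^ 2))
          + (-c) * wwI L₁ L₂ (fun p => f1 (p.1, p.2, c) ^ 2 + f2 (p.1, p.2, c) ^ 2
            + f3 (p.1, p.2, c) ^ 2))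
      + 9 / 8 * wwI L₁ L₂ (fun p => e p * (f1 (p.1, p.2, c) ^ 2 + f2 (p.1, p.2, c) ^ 2))
      + -(9 / 4) * wwI L₁ L₂ (fun p => ∫ z in c..e p, f3 (p.1, p.2, z) * (e1 p * f1 (p.1, p.2, z)
        + e2 p * f2 (p.1, p.2, z))) := by
  have hk := ww_kin D J K
  have hp := ww_poho D J K
  have hgr := ww_green D J K J.c0 J.c1 J.c2 J.c3 J.d1 J.d2 J.d3
  obtain ⟨h1, h2, he, he1, he2, de1, de2, hce⟩ := id D
  obtain ⟨c0, c1, c2, c3, c11, c12, c13, c22, c23, c33, d1, d2, d3, d11, d12, d13, d21, d22, d23, d31, d32, d33⟩ := J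
  simp only [intervalIntegral.integral_const_mul (-1 / 2 : ℝ), wwI_smul (-1 / 2 : ℝ)] at hp
  simp only [← pow_two] at hgr
  have hx := wwI_dx (L₁ := L₁) (L₂ := L₂) (A := fun p => p.1 * (-(e p) * st p - g / 2 * e p ^ 2))
    (A' := fun p => (-(e p) * st p - g / 2 * e p ^ 2)
      + p.1 * (-(e1 p) * st p - e p * st1 p - g * e p * e1 p)) (by fun_prop) (by fun_prop)
    (fun x y => by
      refine HasDerivAt.congr_deriv ((hasDerivAt_id' x).mul ((((de1 x y).neg).mul (dst1 x y)).sub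
        (((de1 x y).pow 2).const_mul (g / 2)))) ?_
      simp; left; ring)
  have hy := wwI_dy (L₁ := L₁) (L₂ := L₂) (A := fun p => p.2 * (-(e p) * st p - g / 2 * e p ^ 2))
    (A' := fun p => (-(e p) * st p - g / 2 * e p ^ 2)
      + p.2 * (-(e2 p) * st p - e p * st2 p - g * e p * e2 p)) (by fun_prop) (by fun_prop)
    (fun x y => by
      refine HasDerivAt.congr_deriv ((hasDerivAt_id' y).mul ((((de2 x y).neg).mul (dst2 x y)).sub
        (((de2 x y).pow 2).const_mul (g / 2)))) ?_
      simp; left; ring)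
  simp only [intervalIntegral.integral_const_mul L₁, intervalIntegral.integral_const_mul L₂,
    zero_mul, intervalIntegral.integral_zero, sub_zero] at hx hy
  rw [hk, ← hx, ← hy]
  rw [hgr] at hp ⊢
  have fin := wwI_lin10 h1 h2
    (F1 := fun p => (-(e p) * st p - g / 2 * e p ^ 2)
      + p.1 * (-(e1 p) * st p - e p * st1 p - g * e p * e1 p))
    (F2 := fun p => (-(e p) * st p - g / 2 * e p ^ 2)
      + p.2 * (-(e2 p) * st p - e p * st2 p - g * e p * e2 p))
    (F3 := fun p => et p * (p.1 * s1 p + p.2 * s2 p) + e p * (p.1 * st1 p + p.2 * st2 p))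
    (F4 := fun p => et p * s p + e p * st p)
    (F5 := fun p => e p ^ 2)
    (F6 := fun p => f (p.1, p.2, e p) * (f3 (p.1, p.2, e p)
          - (e1 p * f1 (p.1, p.2, e p) + e2 p * f2 (p.1, p.2, e p))))
    (F7 := fun p => (p.1 * f1 (p.1, p.2, e p) + p.2 * f2 (p.1, p.2, e p)
            + e p * f3 (p.1, p.2, e p)) * (f3 (p.1, p.2, e p)
          - (e1 p * f1 (p.1, p.2, e p) + e2 p * f2 (p.1, p.2, e p)))
          - 1 / 2 * (f1 (p.1, p.2, e p) ^ 2
        + f2 (p.1, p.2, e p) ^ 2 + f3 (p.1, p.2, e p) ^ 2) * (e p - p.1 * e1 p - p.2 * e2 p)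
        + c / 2 * (f1 (p.1, p.2, c) ^ 2 + f2 (p.1, p.2, c) ^ 2 + f3 (p.1, p.2, c) ^ 2))
    (F8 := fun p => f1 (p.1, p.2, c) ^ 2 + f2 (p.1, p.2, c) ^ 2 + f3 (p.1, p.2, c) ^ 2)
    (F9 := fun p => e p * (f1 (p.1, p.2, c) ^ 2 + f2 (p.1, p.2, c) ^ 2))
    (F10 := fun p => - (e p * (1 / 2 * (f1 (p.1, p.2, e p) ^ 2 + f2 (p.1, p.2, e p) ^ 2
            - f3 (p.1, p.2, e p) ^ 2)
            + f3 (p.1, p.2, e p) * (e1 p * f1 (p.1, p.2, e p) + e2 p * f2 (p.1, p.2, e p))))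
          + 1 / 2 * (e p * (f1 (p.1, p.2, c) ^ 2 + f2 (p.1, p.2, c) ^ 2)))
    (by fun_prop) (by fun_prop) (by fun_prop) (by fun_prop) (by fun_prop) (by fun_prop)
    (by fun_prop) (by fun_prop) (by fun_prop) (by fun_prop)
    1 1 1 (3 / 4) (-(g / 4)) (-(3 / 4)) (-1) (c / 2) (-(9 / 8)) (9 / 4)
    (fun x hx y hy => by
      have hft : ft (x, y, e (x, y)) = - (1 / 2 *
        (f1 (x, y, e (x, y)) ^ 2 + f2 (x, y, e (x, y)) ^ 2 + f3 (x, y, e (x, y)) ^ 2))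
        - g * e (x, y) := by linear_combination bern x hx y hy
      simp only [hs, hs1, hs2, hst, hft, kin x hx y hy]
      ring)
  linear_combination fin - hp

theorem ww_energy_s8 {L₁ L₂ c g : ℝ} {e e1 e2 : ℝ × ℝ → ℝ}
    {f f1 f2 f3 f11 f12 f13 f22 f23 f33 w w1 w2 w3 : ℝ × ℝ × ℝ → ℝ}
    (D : WWDom L₁ L₂ c e e1 e2) (J : WWJet f f1 f2 f3 f11 f12 f13 f22 f23 f33)
    (K : WWFlu L₁ L₂ c e f1 f2 f3 f11 f22 f33)
    (cw : Continuous w) (cw1 : Continuous w1) (cw2 : Continuous w2) (cw3 : Continuous w3)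
    (dw1 : ∀ x y z, HasDerivAt (fun s => w (s, y, z)) (w1 (x, y, z)) x)
    (dw2 : ∀ x y z, HasDerivAt (fun s => w (x, s, z)) (w2 (x, y, z)) y)
    (dw3 : ∀ x y z, HasDerivAt (fun s => w (x, y, s)) (w3 (x, y, z)) z)
    {et : ℝ × ℝ → ℝ} (cet : Continuous et)
    (kin : ∀ x ∈ Icc 0 L₁, ∀ y ∈ Icc 0 L₂, et (x, y) = f3 (x, y, e (x, y))
      - (e1 (x, y) * f1 (x, y, e (x, y)) + e2 (x, y) * f2 (x, y, e (x, y))))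
    (bern : ∀ x ∈ Icc 0 L₁, ∀ y ∈ Icc 0 L₂, w (x, y, e (x, y)) + 1 / 2 *
      (f1 (x, y, e (x, y)) ^ 2 + f2 (x, y, e (x, y)) ^ 2 + f3 (x, y, e (x, y)) ^ 2)
      + g * e (x, y) = 0) :
    g / 2 * wwI L₁ L₂ (fun p => 2 * e p * et p)
      + 1 / 2 * wwI L₁ L₂ (fun p => (∫ z in c..e p, 2 * (w1 (p.1, p.2, z) * f1 (p.1, p.2, z)
        + w2 (p.1, p.2, z) * f2 (p.1, p.2, z) + w3 (p.1, p.2, z) * f3 (p.1, p.2, z)))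
        + (f1 (p.1, p.2, e p) ^ 2 + f2 (p.1, p.2, e p) ^ 2 + f3 (p.1, p.2, e p) ^ 2) * et p) = 0 := by
  have hgr := ww_green D J K cw cw1 cw2 cw3 dw1 dw2 dw3
  obtain ⟨h1, h2, he, he1, he2, de1, de2, hce⟩ := id D
  obtain ⟨c0, c1, c2, c3, c11, c12, c13, c22, c23, c33, d1, d2, d3, d11, d12, d13, d21, d22, d23, d31, d32, d33⟩ := J
  rw [wwI_add (by fun_prop) (by fun_prop)]
  simp only [intervalIntegral.integral_const_mul (2 : ℝ)]
  rw [wwI_smul (2 : ℝ), hgr, ← wwI_smul (2 : ℝ), ← wwI_add (by fun_prop) (by fun_prop), ← wwI_smul, ← wwI_smul,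
    ← wwI_add (by fun_prop) (by fun_prop)]
  rw [wwI_congr h1 h2 (G := fun _ => 0)]
  · simp [wwI]
  · intro x hx y hy
    dsimp only
    have hft : w (x, y, e (x, y)) = - (1 / 2 *
        (f1 (x, y, e (x, y)) ^ 2 + f2 (x, y, e (x, y)) ^ 2 + f3 (x, y, e (x, y)) ^ 2))
        - g * e (x, y) := by linear_combination bern x hx y hy
    rw [hft, kin x hx y hy]
    ring

theorem ww_dt {L₁ L₂ : ℝ} {G G' : ℝ × ℝ × ℝ → ℝ} (hG : Continuous G) (hG' : Continuous G')
    (hd : ∀ t x y, HasDerivAt (fun s => G (s, x, y)) (G' (t, x, y)) t) (t : ℝ) :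
    HasDerivAt (fun t => wwI L₁ L₂ (fun p => G (t, p.1, p.2)))
      (wwI L₁ L₂ (fun p => G' (t, p.1, p.2))) t := by
  unfold wwI
  exact ww_leib_s8 (fun q => ∫ y in (0:ℝ)..L₂, G (q.1, q.2, y))
    (fun q => ∫ y in (0:ℝ)..L₂, G' (q.1, q.2, y)) (by fun_prop) (by fun_prop)
    (fun t x => ww_leib_s8 (fun r => G (r.1, x, r.2)) (fun r => G' (r.1, x, r.2)) (by fun_prop)
      (by fun_prop) (fun t y => hd t x y) _ _ _) _ _ _

theorem wwI_cont {L₁ L₂ : ℝ} {G : ℝ × ℝ × ℝ → ℝ} (hG : Continuous G) :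
    Continuous (fun t => wwI L₁ L₂ (fun p => G (t, p.1, p.2))) := by
  unfold wwI
  fun_prop

/-- directional derivative -/
def wwd {E : Type*} [NormedAddCommGroup E] [NormedSpace ℝ E] (v : E) (f : E → ℝ) : E → ℝ :=
  fun p => fderiv ℝ f p v

section
variable {E : Type*} [NormedAddCommGroup E] [NormedSpace ℝ E]

theorem wwd_smooth {f : E → ℝ} (hf : ContDiff ℝ (⊤ : ℕ∞) f) (v : E) :
    ContDiff ℝ (⊤ : ℕ∞) (wwd v f) := by
  unfold wwd
  exact (hf.fderiv_right (m := ((⊤ : ℕ∞) : WithTop ℕ∞)) (by simp)).clm_apply contDiff_const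

theorem wwd_has {f : E → ℝ} (hf : ContDiff ℝ (⊤ : ℕ∞) f) {γ : ℝ → E} {v : E} {x : ℝ}
    (hγ : HasDerivAt γ v x) : HasDerivAt (fun s => f (γ s)) (wwd v f (γ x)) x :=
  ((hf.differentiable (by simp)) (γ x)).hasFDerivAt.comp_hasDerivAt x hγ

theorem wwd_comm {f : E → ℝ} (hf : ContDiff ℝ (⊤ : ℕ∞) f) (v w : E) :
    wwd v (wwd w f) = wwd w (wwd v f) := by
  have hd : Differentiable ℝ (fderiv ℝ f) :=
    (hf.fderiv_right (m := ((⊤ : ℕ∞) : WithTop ℕ∞)) (by simp)).differentiable (by simp)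
  have aux : ∀ v w : E, ∀ p, wwd v (wwd w f) p = fderiv ℝ (fderiv ℝ f) p v w := by
    intro v w p
    unfold wwd
    rw [fderiv_clm_apply (hd p) (differentiableAt_const w)]
    simp
  funext p
  rw [aux, aux]
  have hs : IsSymmSndFDerivAt ℝ f p := hf.contDiffAt.isSymmSndFDerivAt (by
    rw [minSmoothness_of_isRCLikeNormedField]; exact WithTop.coe_le_coe.2 (le_top : (2 : ℕ∞) ≤ ⊤))
  exact hs v w

end

theorem wwc0 (x y z t : ℝ) : HasDerivAt (fun s : ℝ => (s, x, y, z)) ((1 : ℝ), (0 : ℝ), (0 : ℝ), (0 : ℝ)) t :=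
  (hasDerivAt_id t).prodMk (hasDerivAt_const t (x, y, z))
theorem wwc1 (t y z x : ℝ) : HasDerivAt (fun s : ℝ => (t, s, y, z)) ((0 : ℝ), (1 : ℝ), (0 : ℝ), (0 : ℝ)) x :=
  (hasDerivAt_const x t).prodMk ((hasDerivAt_id x).prodMk (hasDerivAt_const x (y, z)))
theorem wwc2 (t x z y : ℝ) : HasDerivAt (fun s : ℝ => (t, x, s, z)) ((0 : ℝ), (0 : ℝ), (1 : ℝ), (0 : ℝ)) y :=
  (hasDerivAt_const y t).prodMk ((hasDerivAt_const y x).prodMk ((hasDerivAt_id y).prodMk (hasDerivAt_const y z)))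
theorem wwc3 (t x y z : ℝ) : HasDerivAt (fun s : ℝ => (t, x, y, s)) ((0 : ℝ), (0 : ℝ), (0 : ℝ), (1 : ℝ)) z :=
  (hasDerivAt_const z t).prodMk ((hasDerivAt_const z x).prodMk ((hasDerivAt_const z y).prodMk (hasDerivAt_id z)))
theorem wwb0 (x y t : ℝ) : HasDerivAt (fun s : ℝ => (s, x, y)) ((1 : ℝ), (0 : ℝ), (0 : ℝ)) t :=
  (hasDerivAt_id t).prodMk (hasDerivAt_const t (x, y))
theorem wwb1 (t y x : ℝ) : HasDerivAt (fun s : ℝ => (t, s, y)) ((0 : ℝ), (1 : ℝ), (0 : ℝ)) x :=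
  (hasDerivAt_const x t).prodMk ((hasDerivAt_id x).prodMk (hasDerivAt_const x y))
theorem wwb2 (t x y : ℝ) : HasDerivAt (fun s : ℝ => (t, x, s)) ((0 : ℝ), (0 : ℝ), (1 : ℝ)) y :=
  (hasDerivAt_const y t).prodMk ((hasDerivAt_const y x).prodMk (hasDerivAt_id y))

theorem wwd_split (f : ℝ × ℝ × ℝ × ℝ → ℝ) (p : ℝ × ℝ × ℝ × ℝ) (a b c d : ℝ) :
    wwd (a, b, c, d) f p = a * wwd (1, 0, 0, 0) f p + b * wwd (0, 1, 0, 0) f p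
      + c * wwd (0, 0, 1, 0) f p + d * wwd (0, 0, 0, 1) f p := by
  unfold wwd
  have : ((a, b, c, d) : ℝ × ℝ × ℝ × ℝ) = a • (1, 0, 0, 0) + b • (0, 1, 0, 0)
      + c • (0, 0, 1, 0) + d • (0, 0, 0, 1) := by simp
  rw [this]
  simp only [map_add, map_smul, smul_eq_mul]

/-- The identity in terms of uncurried functions. -/
theorem ww_core (L₁ L₂ h g T : ℝ) (hL₁ : 0 < L₁) (hL₂ : 0 < L₂) (hh : 0 < h) (hT : 0 < T)
    (e e0 e1 e2 s s0 s1 s2 s01 s02 : ℝ × ℝ × ℝ → ℝ)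
    (f f0 f1 f2 f3 f01 f02 f03 f11 f12 f13 f22 f23 f33 : ℝ × ℝ × ℝ × ℝ → ℝ)
    (ce : Continuous e) (ce0 : Continuous e0) (ce1 : Continuous e1) (ce2 : Continuous e2)
    (cs : Continuous s) (cs0 : Continuous s0) (cs1 : Continuous s1) (cs2 : Continuous s2)
    (cs01 : Continuous s01) (cs02 : Continuous s02)
    (c : Continuous f) (c0 : Continuous f0) (c1 : Continuous f1) (c2 : Continuous f2)
    (c3 : Continuous f3) (c01 : Continuous f01) (c02 : Continuous f02) (c03 : Continuous f03)
    (c11 : Continuous f11) (c12 : Continuous f12) (c13 : Continuous f13) (c22 : Continuous f22)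
    (c23 : Continuous f23) (c33 : Continuous f33)
    (de0 : ∀ t x y, HasDerivAt (fun s => e (s, x, y)) (e0 (t, x, y)) t)
    (de1 : ∀ t x y, HasDerivAt (fun s => e (t, s, y)) (e1 (t, x, y)) x)
    (de2 : ∀ t x y, HasDerivAt (fun s => e (t, x, s)) (e2 (t, x, y)) y)
    (ds0 : ∀ t x y, HasDerivAt (fun r => s (r, x, y)) (s0 (t, x, y)) t)
    (ds01 : ∀ t x y, HasDerivAt (fun r => s0 (t, r, y)) (s01 (t, x, y)) x)
    (ds02 : ∀ t x y, HasDerivAt (fun r => s0 (t, x, r)) (s02 (t, x, y)) y)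
    (ds10 : ∀ t x y, HasDerivAt (fun r => s1 (r, x, y)) (s01 (t, x, y)) t)
    (ds20 : ∀ t x y, HasDerivAt (fun r => s2 (r, x, y)) (s02 (t, x, y)) t)
    (hs : ∀ t x y, s (t, x, y) = f (t, x, y, e (t, x, y)))
    (hs0 : ∀ t x y, s0 (t, x, y) = f0 (t, x, y, e (t, x, y)) + f3 (t, x, y, e (t, x, y)) * e0 (t, x, y))
    (hs1 : ∀ t x y, s1 (t, x, y) = f1 (t, x, y, e (t, x, y)) + f3 (t, x, y, e (t, x, y)) * e1 (t, x, y))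
    (hs2 : ∀ t x y, s2 (t, x, y) = f2 (t, x, y, e (t, x, y)) + f3 (t, x, y, e (t, x, y)) * e2 (t, x, y))
    (J : ∀ t, WWJet (fun q => f (t, q)) (fun q => f1 (t, q)) (fun q => f2 (t, q))
      (fun q => f3 (t, q)) (fun q => f11 (t, q)) (fun q => f12 (t, q)) (fun q => f13 (t, q))
      (fun q => f22 (t, q)) (fun q => f23 (t, q)) (fun q => f33 (t, q)))
    (d01 : ∀ t x y z, HasDerivAt (fun s => f0 (t, s, y, z)) (f01 (t, x, y, z)) x)
    (d02 : ∀ t x y z, HasDerivAt (fun s => f0 (t, x, s, z)) (f02 (t, x, y, z)) y)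
    (d03 : ∀ t x y z, HasDerivAt (fun s => f0 (t, x, y, s)) (f03 (t, x, y, z)) z)
    (d10 : ∀ t x y z, HasDerivAt (fun s => f1 (s, x, y, z)) (f01 (t, x, y, z)) t)
    (d20 : ∀ t x y z, HasDerivAt (fun s => f2 (s, x, y, z)) (f02 (t, x, y, z)) t)
    (d30 : ∀ t x y z, HasDerivAt (fun s => f3 (s, x, y, z)) (f03 (t, x, y, z)) t)
    (D : ∀ t ∈ Icc 0 T, WWDom L₁ L₂ (-h) (fun p => e (t, p)) (fun p => e1 (t, p)) (fun p => e2 (t, p)))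
    (K : ∀ t ∈ Icc 0 T, WWFlu L₁ L₂ (-h) (fun p => e (t, p)) (fun q => f1 (t, q))
      (fun q => f2 (t, q)) (fun q => f3 (t, q)) (fun q => f11 (t, q)) (fun q => f22 (t, q))
      (fun q => f33 (t, q)))
    (kin : ∀ t ∈ Icc 0 T, ∀ x ∈ Icc 0 L₁, ∀ y ∈ Icc 0 L₂, e0 (t, x, y) = f3 (t, x, y, e (t, x, y))
      - (e1 (t, x, y) * f1 (t, x, y, e (t, x, y)) + e2 (t, x, y) * f2 (t, x, y, e (t, x, y))))
    (bern : ∀ t ∈ Icc 0 T, ∀ x ∈ Icc 0 L₁, ∀ y ∈ Icc 0 L₂, f0 (t, x, y, e (t, x, y)) + 1 / 2 *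
      (f1 (t, x, y, e (t, x, y)) ^ 2 + f2 (t, x, y, e (t, x, y)) ^ 2 + f3 (t, x, y, e (t, x, y)) ^ 2)
      + g * e (t, x, y) = 0) :
    (∫ t in (0:ℝ)..T, (L₁ * (∫ y in (0:ℝ)..L₂, (-(e (t, L₁, y)) * s0 (t, L₁, y) - g / 2 * e (t, L₁, y) ^ 2))
      + L₂ * (∫ x in (0:ℝ)..L₁, (-(e (t, x, L₂)) * s0 (t, x, L₂) - g / 2 * e (t, x, L₂) ^ 2))))
    = T / 2 * (g / 2 * wwI L₁ L₂ (fun p => e (0, p.1, p.2) ^ 2)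
        + 1 / 2 * wwI L₁ L₂ (fun p => ∫ z in (-h)..e (0, p.1, p.2), (f1 (0, p.1, p.2, z) ^ 2
          + f2 (0, p.1, p.2, z) ^ 2 + f3 (0, p.1, p.2, z) ^ 2)))
      + 1 / 2 * (∫ t in (0:ℝ)..T, (L₁ * (∫ y in (0:ℝ)..L₂, ∫ z in (-h)..e (t, L₁, y), (f1 (t, L₁, y, z) ^ 2
            + f2 (t, L₁, y, z) ^ 2 + f3 (t, L₁, y, z) ^ 2))
          + L₂ * (∫ x in (0:ℝ)..L₁, ∫ z in (-h)..e (t, x, L₂), (f1 (t, x, L₂, z) ^ 2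
            + f2 (t, x, L₂, z) ^ 2 + f3 (t, x, L₂, z) ^ 2))
          + h * wwI L₁ L₂ (fun p => f1 (t, p.1, p.2, -h) ^ 2 + f2 (t, p.1, p.2, -h) ^ 2
            + f3 (t, p.1, p.2, -h) ^ 2)))
      + 9 / 8 * (∫ t in (0:ℝ)..T, wwI L₁ L₂ (fun p => e (t, p.1, p.2) * (f1 (t, p.1, p.2, -h) ^ 2
          + f2 (t, p.1, p.2, -h) ^ 2)))
      + -(9 / 4) * (∫ t in (0:ℝ)..T, wwI L₁ L₂ (fun p => ∫ z in (-h)..e (t, p.1, p.2),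
          f3 (t, p.1, p.2, z) * (e1 (t, p.1, p.2) * f1 (t, p.1, p.2, z)
        + e2 (t, p.1, p.2) * f2 (t, p.1, p.2, z))))
      + (-(3 / 4) * (wwI L₁ L₂ (fun p => e (T, p.1, p.2) * s (T, p.1, p.2))
          - wwI L₁ L₂ (fun p => e (0, p.1, p.2) * s (0, p.1, p.2)))
        - (wwI L₁ L₂ (fun p => e (T, p.1, p.2) * (p.1 * s1 (T, p.1, p.2) + p.2 * s2 (T, p.1, p.2)))
          - wwI L₁ L₂ (fun p => e (0, p.1, p.2) * (p.1 * s1 (0, p.1, p.2) + p.2 * s2 (0, p.1, p.2))))) := by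
  -- time derivatives
  have hN := ww_dt (L₁ := L₁) (L₂ := L₂) (G := fun q => e q * s q)
    (G' := fun q => e0 q * s q + e q * s0 q) (by fun_prop) (by fun_prop)
    (fun t x y => (de0 t x y).mul (ds0 t x y))
  have hM := ww_dt (L₁ := L₁) (L₂ := L₂) (G := fun q => e q * (q.2.1 * s1 q + q.2.2 * s2 q))
    (G' := fun q => e0 q * (q.2.1 * s1 q + q.2.2 * s2 q) + e q * (q.2.1 * s01 q + q.2.2 * s02 q))
    (by fun_prop) (by fun_prop)
    (fun t x y => (de0 t x y).mul (((ds10 t x y).const_mul x).add ((ds20 t x y).const_mul y)))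
  have hH1 := ww_dt (L₁ := L₁) (L₂ := L₂) (G := fun q => e q ^ 2)
    (G' := fun q => 2 * e q * e0 q) (by fun_prop) (by fun_prop)
    (fun t x y => ((de0 t x y).pow 2).congr_deriv (by simp))
  have hH2 := ww_dt (L₁ := L₁) (L₂ := L₂)
    (G := fun q => ∫ z in (-h)..e q, (f1 (q.1, q.2.1, q.2.2, z) ^ 2 + f2 (q.1, q.2.1, q.2.2, z) ^ 2
      + f3 (q.1, q.2.1, q.2.2, z) ^ 2))
    (G' := fun q => (∫ z in (-h)..e q, 2 * (f01 (q.1, q.2.1, q.2.2, z) * f1 (q.1, q.2.1, q.2.2, z)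
      + f02 (q.1, q.2.1, q.2.2, z) * f2 (q.1, q.2.1, q.2.2, z)
      + f03 (q.1, q.2.1, q.2.2, z) * f3 (q.1, q.2.1, q.2.2, z)))
      + (f1 (q.1, q.2.1, q.2.2, e q) ^ 2 + f2 (q.1, q.2.1, q.2.2, e q) ^ 2
      + f3 (q.1, q.2.1, q.2.2, e q) ^ 2) * e0 q) (by fun_prop) (by fun_prop)
    (fun t x y => by
      exact ww_leibv
        (fun r => f1 (r.1, x, y, r.2) ^ 2 + f2 (r.1, x, y, r.2) ^ 2 + f3 (r.1, x, y, r.2) ^ 2)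
        (fun r => 2 * (f01 (r.1, x, y, r.2) * f1 (r.1, x, y, r.2)
          + f02 (r.1, x, y, r.2) * f2 (r.1, x, y, r.2)
          + f03 (r.1, x, y, r.2) * f3 (r.1, x, y, r.2)))
        (by fun_prop) (by fun_prop)
        (fun t z => by
          refine HasDerivAt.congr_deriv ((((d10 t x y z).pow 2).add ((d20 t x y z).pow 2)).add
            ((d30 t x y z).pow 2)) ?_
          simp; ring)
        (fun r => e (r, x, y)) (-h) (e0 (t, x, y)) t (de0 t x y))
  -- conservation of energy
  have hE : ∀ t ∈ Icc 0 T, g / 2 * wwI L₁ L₂ (fun p => e (t, p.1, p.2) ^ 2)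
        + 1 / 2 * wwI L₁ L₂ (fun p => ∫ z in (-h)..e (t, p.1, p.2), (f1 (t, p.1, p.2, z) ^ 2
          + f2 (t, p.1, p.2, z) ^ 2 + f3 (t, p.1, p.2, z) ^ 2))
      = g / 2 * wwI L₁ L₂ (fun p => e (0, p.1, p.2) ^ 2)
        + 1 / 2 * wwI L₁ L₂ (fun p => ∫ z in (-h)..e (0, p.1, p.2), (f1 (0, p.1, p.2, z) ^ 2
          + f2 (0, p.1, p.2, z) ^ 2 + f3 (0, p.1, p.2, z) ^ 2)) := by
    intro t ht
    have hder := fun r : ℝ => ((hH1 r).const_mul (g / 2)).add ((hH2 r).const_mul (1 / 2))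
    have hint := intervalIntegral.integral_eq_sub_of_hasDerivAt (a := 0) (b := t)
      (f' := fun _ => (0:ℝ)) (fun r hr => by
        rw [uIcc_of_le ht.1] at hr
        have hrT : r ∈ Icc 0 T := ⟨hr.1, hr.2.trans ht.2⟩
        refine (hder r).congr_deriv ?_
        exact ww_energy_s8 (w := fun q => f0 (r, q)) (w1 := fun q => f01 (r, q))
          (w2 := fun q => f02 (r, q)) (w3 := fun q => f03 (r, q)) (et := fun p => e0 (r, p))
          (D r hrT) (J r) (K r hrT) (by fun_prop) (by fun_prop)
          (by fun_prop) (by fun_prop) (fun x y z => d01 r x y z) (fun x y z => d02 r x y z)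
          (fun x y z => d03 r x y z) (by fun_prop) (kin r hrT) (bern r hrT)) (by simp)
    simp only [intervalIntegral.integral_zero] at hint
    exact (sub_eq_zero.mp hint.symm)
  have iN := intervalIntegral.integral_eq_sub_of_hasDerivAt (a := 0) (b := T)
    (fun t _ => hN t) (Continuous.intervalIntegrable (wwI_cont
      (G := fun q => e0 q * s q + e q * s0 q) (by fun_prop)) _ _)
  have iM := intervalIntegral.integral_eq_sub_of_hasDerivAt (a := 0) (b := T)
    (fun t _ => hM t) (Continuous.intervalIntegrable (wwI_cont
      (G := fun q => e0 q * (q.2.1 * s1 q + q.2.2 * s2 q) + e q * (q.2.1 * s01 q + q.2.2 * s02 q)) (by fun_prop)) _ _)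
  dsimp only at iN iM
  rw [← iN, ← iM]
  -- pointwise identity
  have slice : ∀ t ∈ Icc 0 T, _ := fun t ht => ww_slice (g := g) (ft := fun q => f0 (t, q))
    (et := fun p => e0 (t, p)) (s := fun p => s (t, p)) (s1 := fun p => s1 (t, p))
    (s2 := fun p => s2 (t, p)) (st := fun p => s0 (t, p)) (st1 := fun p => s01 (t, p))
    (st2 := fun p => s02 (t, p)) (D t ht) (J t) (K t ht)
    (by fun_prop) (by fun_prop) (by fun_prop) (by fun_prop) (by fun_prop) (by fun_prop)
    (by fun_prop) (fun p => hs t p.1 p.2) (fun p => hs1 t p.1 p.2) (fun p => hs2 t p.1 p.2)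
    (fun p => hs0 t p.1 p.2) (fun x y => ds01 t x y) (fun x y => ds02 t x y) (kin t ht) (bern t ht)
  have total := intervalIntegral.integral_congr (a := 0) (b := T) (μ := volume)
    (f := fun t => (L₁ * (∫ y in (0:ℝ)..L₂, (-(e (t, L₁, y)) * s0 (t, L₁, y) - g / 2 * e (t, L₁, y) ^ 2))
      + L₂ * (∫ x in (0:ℝ)..L₁, (-(e (t, x, L₂)) * s0 (t, x, L₂) - g / 2 * e (t, x, L₂) ^ 2))))
    (g := fun t => (-1) * wwI L₁ L₂ (fun p => e0 (t, p.1, p.2) * (p.1 * s1 (t, p.1, p.2) + p.2 * s2 (t, p.1, p.2))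
        + e (t, p.1, p.2) * (p.1 * s01 (t, p.1, p.2) + p.2 * s02 (t, p.1, p.2)))
      + (-(3 / 4)) * wwI L₁ L₂ (fun p => e0 (t, p.1, p.2) * s (t, p.1, p.2) + e (t, p.1, p.2) * s0 (t, p.1, p.2))
      + 1 / 2 * (g / 2 * wwI L₁ L₂ (fun p => e (0, p.1, p.2) ^ 2)
        + 1 / 2 * wwI L₁ L₂ (fun p => ∫ z in (-h)..e (0, p.1, p.2), (f1 (0, p.1, p.2, z) ^ 2
          + f2 (0, p.1, p.2, z) ^ 2 + f3 (0, p.1, p.2, z) ^ 2)))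
      + 1 / 2 * (L₁ * (∫ y in (0:ℝ)..L₂, ∫ z in (-h)..e (t, L₁, y), (f1 (t, L₁, y, z) ^ 2
            + f2 (t, L₁, y, z) ^ 2 + f3 (t, L₁, y, z) ^ 2))
          + L₂ * (∫ x in (0:ℝ)..L₁, ∫ z in (-h)..e (t, x, L₂), (f1 (t, x, L₂, z) ^ 2
            + f2 (t, x, L₂, z) ^ 2 + f3 (t, x, L₂, z) ^ 2))
          + h * wwI L₁ L₂ (fun p => f1 (t, p.1, p.2, -h) ^ 2 + f2 (t, p.1, p.2, -h) ^ 2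
            + f3 (t, p.1, p.2, -h) ^ 2))
      + 9 / 8 * wwI L₁ L₂ (fun p => e (t, p.1, p.2) * (f1 (t, p.1, p.2, -h) ^ 2
          + f2 (t, p.1, p.2, -h) ^ 2))
      + -(9 / 4) * wwI L₁ L₂ (fun p => ∫ z in (-h)..e (t, p.1, p.2),
          f3 (t, p.1, p.2, z) * (e1 (t, p.1, p.2) * f1 (t, p.1, p.2, z)
        + e2 (t, p.1, p.2) * f2 (t, p.1, p.2, z))))
    (fun t ht => by
      rw [uIcc_of_le hT.le] at ht
      have h1 := slice t ht
      have h2 := hE t ht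
      dsimp only at h1 ⊢
      rw [h1, ← h2, neg_neg]
      ring)
  refine total.trans ?_
  have k1 : Continuous fun t => wwI L₁ L₂ (fun p => e0 (t, p.1, p.2) * (p.1 * s1 (t, p.1, p.2) + p.2 * s2 (t, p.1, p.2))
        + e (t, p.1, p.2) * (p.1 * s01 (t, p.1, p.2) + p.2 * s02 (t, p.1, p.2))) := by
    unfold wwI; fun_prop
  have k2 : Continuous fun t => wwI L₁ L₂ (fun p => e0 (t, p.1, p.2) * s (t, p.1, p.2) + e (t, p.1, p.2) * s0 (t, p.1, p.2)) := by
    unfold wwI; fun_prop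
  have k3 : Continuous fun t => (L₁ * (∫ y in (0:ℝ)..L₂, ∫ z in (-h)..e (t, L₁, y), (f1 (t, L₁, y, z) ^ 2
            + f2 (t, L₁, y, z) ^ 2 + f3 (t, L₁, y, z) ^ 2))
          + L₂ * (∫ x in (0:ℝ)..L₁, ∫ z in (-h)..e (t, x, L₂), (f1 (t, x, L₂, z) ^ 2
            + f2 (t, x, L₂, z) ^ 2 + f3 (t, x, L₂, z) ^ 2))
          + h * wwI L₁ L₂ (fun p => f1 (t, p.1, p.2, -h) ^ 2 + f2 (t, p.1, p.2, -h) ^ 2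
            + f3 (t, p.1, p.2, -h) ^ 2)) := by
    unfold wwI; fun_prop
  have k4 : Continuous fun t => wwI L₁ L₂ (fun p => e (t, p.1, p.2) * (f1 (t, p.1, p.2, -h) ^ 2
          + f2 (t, p.1, p.2, -h) ^ 2)) := by
    unfold wwI; fun_prop
  have k5 : Continuous fun t => wwI L₁ L₂ (fun p => ∫ z in (-h)..e (t, p.1, p.2),
          f3 (t, p.1, p.2, z) * (e1 (t, p.1, p.2) * f1 (t, p.1, p.2, z)
        + e2 (t, p.1, p.2) * f2 (t, p.1, p.2, z))) := by
    unfold wwI; fun_prop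
  have lin : ∀ (u1 u2 u3 u4 u5 : ℝ → ℝ) (_ : Continuous u1) (_ : Continuous u2) (_ : Continuous u3)
      (_ : Continuous u4) (_ : Continuous u5) (H : ℝ),
      ∫ t in (0:ℝ)..T, ((-1) * u1 t + (-(3 / 4)) * u2 t + 1 / 2 * H + 1 / 2 * u3 t + 9 / 8 * u4 t
        + -(9 / 4) * u5 t) = T / 2 * H + 1 / 2 * (∫ t in (0:ℝ)..T, u3 t)
          + 9 / 8 * (∫ t in (0:ℝ)..T, u4 t) + -(9 / 4) * (∫ t in (0:ℝ)..T, u5 t)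
          + (-(3 / 4) * (∫ t in (0:ℝ)..T, u2 t) - ∫ t in (0:ℝ)..T, u1 t) := by
    intro u1 u2 u3 u4 u5 v1 v2 v3 v4 v5 H
    rw [intervalIntegral.integral_add, intervalIntegral.integral_add, intervalIntegral.integral_add,
      intervalIntegral.integral_add, intervalIntegral.integral_add]
    · simp only [intervalIntegral.integral_const_mul, intervalIntegral.integral_const, smul_eq_mul]
      ring
    all_goals exact Continuous.intervalIntegrable (by fun_prop) _ _
  exact lin _ _ _ _ _ k1 k2 k3 k4 k5 _

/-- the main identity (Theorem 4.1) for three-dimensional waves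
(`d = 2`): `𝓑(T) = (T/2)𝓗 + P + I₁ + I₂ + I₃`. -/
theorem main_identity_3d
    (L₁ L₂ h g T : ℝ) (hL₁ : 0 < L₁) (hL₂ : 0 < L₂) (hh : 0 < h) (hg : 0 < g) (hT : 0 < T)
    (η : ℝ → ℝ → ℝ → ℝ) (ϕ : ℝ → ℝ → ℝ → ℝ → ℝ)
    (hsol : IsWW3D L₁ L₂ h g T η ϕ) :
    bigB L₁ L₂ g T η ϕ
      = T / 2 * energy3D L₁ L₂ h g η ϕ 0
        + bigP L₁ L₂ h T η ϕ
        + 9 / 8 * (∫ t in (0:ℝ)..T, ∫ x₁ in (0:ℝ)..L₁, ∫ x₂ in (0:ℝ)..L₂,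
            η t x₁ x₂ * gradXSq3 ϕ t x₁ x₂ (-h))
        + (-(9 / 4) * ∫ t in (0:ℝ)..T, ∫ x₁ in (0:ℝ)..L₁, ∫ x₂ in (0:ℝ)..L₂,
            ∫ y in (-h)..(η t x₁ x₂),
              phiY3 ϕ t x₁ x₂ y
                * (etaX1 η t x₁ x₂ * phiX1 ϕ t x₁ x₂ y
                    + etaX2 η t x₁ x₂ * phiX2 ϕ t x₁ x₂ y))
        + (-(3 / 4) * ((∫ x₁ in (0:ℝ)..L₁, ∫ x₂ in (0:ℝ)..L₂, η T x₁ x₂ * psi3 η ϕ T x₁ x₂)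
              - ∫ x₁ in (0:ℝ)..L₁, ∫ x₂ in (0:ℝ)..L₂, η 0 x₁ x₂ * psi3 η ϕ 0 x₁ x₂)
            - ((∫ x₁ in (0:ℝ)..L₁, ∫ x₂ in (0:ℝ)..L₂,
                  η T x₁ x₂ * (x₁ * psi3X1 η ϕ T x₁ x₂ + x₂ * psi3X2 η ϕ T x₁ x₂))
                - ∫ x₁ in (0:ℝ)..L₁, ∫ x₂ in (0:ℝ)..L₂,
                    η 0 x₁ x₂ * (x₁ * psi3X1 η ϕ 0 x₁ x₂ + x₂ * psi3X2 η ϕ 0 x₁ x₂))) := by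
  have hE : ContDiff ℝ (⊤ : ℕ∞) (fun p : ℝ × ℝ × ℝ => η p.1 p.2.1 p.2.2) := hsol.smooth_eta
  have hF : ContDiff ℝ (⊤ : ℕ∞) (fun p : ℝ × ℝ × ℝ × ℝ => ϕ p.1 p.2.1 p.2.2.1 p.2.2.2) :=
    hsol.smooth_phi
  have hS : ContDiff ℝ (⊤ : ℕ∞) (fun p : ℝ × ℝ × ℝ => psi3 η ϕ p.1 p.2.1 p.2.2) :=
    hF.comp (contDiff_fst.prodMk ((contDiff_fst.comp contDiff_snd).prodMk
      ((contDiff_snd.comp contDiff_snd).prodMk hE)))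
  set F : ℝ × ℝ × ℝ × ℝ → ℝ := fun p => ϕ p.1 p.2.1 p.2.2.1 p.2.2.2 with hFdef
  set E : ℝ × ℝ × ℝ → ℝ := fun p => η p.1 p.2.1 p.2.2 with hEdef
  set S : ℝ × ℝ × ℝ → ℝ := fun p => psi3 η ϕ p.1 p.2.1 p.2.2 with hSdef
  have tF0 : ∀ t x y z, phiT3 ϕ t x y z = wwd (1, 0, 0, 0) F (t, x, y, z) :=
    fun t x y z => (wwd_has hF (wwc0 x y z t)).deriv
  have tF1 : ∀ t x y z, phiX1 ϕ t x y z = wwd (0, 1, 0, 0) F (t, x, y, z) :=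
    fun t x y z => (wwd_has hF (wwc1 t y z x)).deriv
  have tF2 : ∀ t x y z, phiX2 ϕ t x y z = wwd (0, 0, 1, 0) F (t, x, y, z) :=
    fun t x y z => (wwd_has hF (wwc2 t x z y)).deriv
  have tF3 : ∀ t x y z, phiY3 ϕ t x y z = wwd (0, 0, 0, 1) F (t, x, y, z) :=
    fun t x y z => (wwd_has hF (wwc3 t x y z)).deriv
  have tE0 : ∀ t x y, etaT3 η t x y = wwd (1, 0, 0) E (t, x, y) :=
    fun t x y => (wwd_has hE (wwb0 x y t)).deriv
  have tE1 : ∀ t x y, etaX1 η t x y = wwd (0, 1, 0) E (t, x, y) :=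
    fun t x y => (wwd_has hE (wwb1 t y x)).deriv
  have tE2 : ∀ t x y, etaX2 η t x y = wwd (0, 0, 1) E (t, x, y) :=
    fun t x y => (wwd_has hE (wwb2 t x y)).deriv
  have tS0 : ∀ t x y, psi3T η ϕ t x y = wwd (1, 0, 0) S (t, x, y) :=
    fun t x y => (wwd_has hS (wwb0 x y t)).deriv
  have tS1 : ∀ t x y, psi3X1 η ϕ t x y = wwd (0, 1, 0) S (t, x, y) :=
    fun t x y => (wwd_has hS (wwb1 t y x)).deriv
  have tS2 : ∀ t x y, psi3X2 η ϕ t x y = wwd (0, 0, 1) S (t, x, y) :=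
    fun t x y => (wwd_has hS (wwb2 t x y)).deriv
  have hF0 := wwd_smooth hF (1, 0, 0, 0)
  have hF1 := wwd_smooth hF (0, 1, 0, 0)
  have hF2 := wwd_smooth hF (0, 0, 1, 0)
  have hF3 := wwd_smooth hF (0, 0, 0, 1)
  have hS0 := wwd_smooth hS (1, 0, 0)
  have hS1 := wwd_smooth hS (0, 1, 0)
  have hS2 := wwd_smooth hS (0, 0, 1)
  have hEc : ∀ t x y, η t x y = E (t, x, y) := fun _ _ _ => rfl
  have hSc : ∀ t x y, psi3 η ϕ t x y = S (t, x, y) := fun _ _ _ => rfl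
  have ce1 := (wwd_smooth hE (0, 1, 0)).continuous
  have ce2 := (wwd_smooth hE (0, 0, 1)).continuous
  have cE := hE.continuous
  have c1 := hF1.continuous
  have c2 := hF2.continuous
  have c3 := hF3.continuous
  have cF := hF.continuous
  have c11 := (wwd_smooth hF1 (0, 1, 0, 0)).continuous
  have c12 := (wwd_smooth hF1 (0, 0, 1, 0)).continuous
  have c13 := (wwd_smooth hF1 (0, 0, 0, 1)).continuous
  have c22 := (wwd_smooth hF2 (0, 0, 1, 0)).continuous
  have c23 := (wwd_smooth hF2 (0, 0, 0, 1)).continuous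
  have c33 := (wwd_smooth hF3 (0, 0, 0, 1)).continuous
  have key := ww_core L₁ L₂ h g T hL₁ hL₂ hh hT E (wwd (1, 0, 0) E) (wwd (0, 1, 0) E)
    (wwd (0, 0, 1) E) S (wwd (1, 0, 0) S) (wwd (0, 1, 0) S) (wwd (0, 0, 1) S)
    (wwd (0, 1, 0) (wwd (1, 0, 0) S)) (wwd (0, 0, 1) (wwd (1, 0, 0) S))
    F (wwd (1, 0, 0, 0) F) (wwd (0, 1, 0, 0) F) (wwd (0, 0, 1, 0) F) (wwd (0, 0, 0, 1) F)
    (wwd (0, 1, 0, 0) (wwd (1, 0, 0, 0) F)) (wwd (0, 0, 1, 0) (wwd (1, 0, 0, 0) F))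
    (wwd (0, 0, 0, 1) (wwd (1, 0, 0, 0) F))
    (wwd (0, 1, 0, 0) (wwd (0, 1, 0, 0) F)) (wwd (0, 0, 1, 0) (wwd (0, 1, 0, 0) F))
    (wwd (0, 0, 0, 1) (wwd (0, 1, 0, 0) F)) (wwd (0, 0, 1, 0) (wwd (0, 0, 1, 0) F))
    (wwd (0, 0, 0, 1) (wwd (0, 0, 1, 0) F)) (wwd (0, 0, 0, 1) (wwd (0, 0, 0, 1) F))
    cE (wwd_smooth hE _).continuous ce1 ce2
    hS.continuous hS0.continuous hS1.continuous hS2.continuous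
    (wwd_smooth hS0 _).continuous (wwd_smooth hS0 _).continuous
    cF hF0.continuous c1 c2 c3 (wwd_smooth hF0 _).continuous (wwd_smooth hF0 _).continuous
    (wwd_smooth hF0 _).continuous c11 c12 c13 c22 c23 c33
    (fun t x y => wwd_has hE (wwb0 x y t))
    (fun t x y => wwd_has hE (wwb1 t y x))
    (fun t x y => wwd_has hE (wwb2 t x y))
    (fun t x y => wwd_has hS (wwb0 x y t))
    (fun t x y => wwd_has hS0 (wwb1 t y x))
    (fun t x y => wwd_has hS0 (wwb2 t x y))
    (fun t x y => by rw [wwd_comm hS]; exact wwd_has hS1 (wwb0 x y t))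
    (fun t x y => by rw [wwd_comm hS]; exact wwd_has hS2 (wwb0 x y t))
    (fun t x y => rfl)
    (fun t x y => by
      have a := wwd_has hF ((hasDerivAt_id t).prodMk ((hasDerivAt_const t x).prodMk
        ((hasDerivAt_const t y).prodMk (wwd_has hE (wwb0 x y t)))))
      have b := (wwd_has hS (wwb0 x y t)).unique a
      rw [wwd_split] at b
      rw [b]; simp only [id]; ring)
    (fun t x y => by
      have a := wwd_has hF ((hasDerivAt_const x t).prodMk ((hasDerivAt_id x).prodMk
        ((hasDerivAt_const x y).prodMk (wwd_has hE (wwb1 t y x)))))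
      have b := (wwd_has hS (wwb1 t y x)).unique a
      rw [wwd_split] at b
      rw [b]; simp only [id]; ring)
    (fun t x y => by
      have a := wwd_has hF ((hasDerivAt_const y t).prodMk ((hasDerivAt_const y x).prodMk
        ((hasDerivAt_id y).prodMk (wwd_has hE (wwb2 t x y)))))
      have b := (wwd_has hS (wwb2 t x y)).unique a
      rw [wwd_split] at b
      rw [b]; simp only [id]; ring)
    (fun t =>
      { c0 := by fun_prop
        c1 := by fun_prop
        c2 := by fun_prop
        c3 := by fun_prop
        c11 := by fun_prop
        c12 := by fun_prop
        c13 := by fun_prop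
        c22 := by fun_prop
        c23 := by fun_prop
        c33 := by fun_prop
        d1 := fun x y z => wwd_has hF (wwc1 t y z x)
        d2 := fun x y z => wwd_has hF (wwc2 t x z y)
        d3 := fun x y z => wwd_has hF (wwc3 t x y z)
        d11 := fun x y z => wwd_has hF1 (wwc1 t y z x)
        d12 := fun x y z => wwd_has hF1 (wwc2 t x z y)
        d13 := fun x y z => wwd_has hF1 (wwc3 t x y z)
        d21 := fun x y z => by rw [wwd_comm hF]; exact wwd_has hF2 (wwc1 t y z x)
        d22 := fun x y z => wwd_has hF2 (wwc2 t x z y)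
        d23 := fun x y z => wwd_has hF2 (wwc3 t x y z)
        d31 := fun x y z => by rw [wwd_comm hF]; exact wwd_has hF3 (wwc1 t y z x)
        d32 := fun x y z => by rw [wwd_comm hF]; exact wwd_has hF3 (wwc2 t x z y)
        d33 := fun x y z => wwd_has hF3 (wwc3 t x y z) })
    (fun t x y z => wwd_has hF0 (wwc1 t y z x))
    (fun t x y z => wwd_has hF0 (wwc2 t x z y))
    (fun t x y z => wwd_has hF0 (wwc3 t x y z))
    (fun t x y z => by rw [wwd_comm hF]; exact wwd_has hF1 (wwc0 x y z t))
    (fun t x y z => by rw [wwd_comm hF]; exact wwd_has hF2 (wwc0 x y z t))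
    (fun t x y z => by rw [wwd_comm hF]; exact wwd_has hF3 (wwc0 x y z t))
    (fun t ht =>
      { h1 := hL₁.le
        h2 := hL₂.le
        he := by fun_prop
        he1 := by fun_prop
        he2 := by fun_prop
        de1 := fun x y => wwd_has hE (wwb1 t y x)
        de2 := fun x y => wwd_has hE (wwb2 t x y)
        hce := fun x hx y hy => by
          have := hsol.eta_lower t ht x hx y hy
          rw [hEc] at this
          show -h ≤ E (t, x, y)
          linarith })
    (fun t ht =>
      { lap := fun x hx y hy z hz => by
          have := hsol.laplace t ht x hx y hy z hz
          simp only [tF1, tF2, tF3] at this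
          rw [(wwd_has hF1 (wwc1 t y z x)).deriv, (wwd_has hF2 (wwc2 t x z y)).deriv,
            (wwd_has hF3 (wwc3 t x y z)).deriv] at this
          exact this
        w10 := fun y hy z hz => by
          have := hsol.bc_x1 t ht 0 (by simp) y hy z hz
          rwa [tF1] at this
        w1L := fun y hy z hz => by
          have := hsol.bc_x1 t ht L₁ (by simp) y hy z hz
          rwa [tF1] at this
        w20 := fun x hx z hz => by
          have := hsol.bc_x2 t ht 0 (by simp) x hx z hz
          rwa [tF2] at this
        w2L := fun x hx z hz => by
          have := hsol.bc_x2 t ht L₂ (by simp) x hx z hz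
          rwa [tF2] at this
        bot := fun x hx y hy => by
          have := hsol.bc_bottom t ht x hx y hy
          rwa [tF3] at this })
    (fun t ht x hx y hy => by
      have := hsol.kinematic t ht x hx y hy
      rwa [tE0, tE1, tE2, tF1, tF2, tF3] at this)
    (fun t ht x hx y hy => by
      have := hsol.bernoulli t ht x hx y hy
      rwa [tF0, tF1, tF2, tF3] at this)
  simp only [bigB, bigP, energy3D, Theta3, gradSq3, gradXSq3, tF1, tF2, tF3, tE1, tE2, tS0, tS1,
    tS2]
  unfold wwI at key
  exact key
end
end
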